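/- arXiv:2503.19256 — 2 statements merged into one kernel-verified Lean document; each statement's English description precedes it below -/
import Mathlib

section
/- Theorem (Faber-Krahn implies heat kernel upper bound): Let (Γ, π, μ) be a weighted graph with controlled and uniformly lazy weights, and let F be a positive function of pairs (z, r) with z ∈ Γ, r > 0, such that Λ(B(z,r), ν) = (C/r²)(F(z,r)/ν)^α is a relative Faber-Krahn function of Γ for some constants C, α > 0. Then there exist constants c₁, c₂ > 0 such that for all x, y ∈ Γ and all integers n ≥ 1: p(n, x, y) ≤ c₁ (F(x, √n) F(y, √n))^{−1/2} exp(−d(x,y)²/(c₂ n)). -/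
open scoped BigOperators

/-- Sum of a real-valued function over a set of vertices. -/
noncomputable def setSum {V : Type*} (A : Set V) (f : V → ℝ) : ℝ := ∑' y : A, f (y : V)

open Classical in
/-- The Markov kernel attached to vertex weights `pw` and edge weights `ew`. -/
noncomputable def mkernel {V : Type*} (pw : V → ℝ) (ew : V → V → ℝ) (x y : V) : ℝ :=
  if x = y then 1 - (∑' z, ew x z) / pw x else ew x y / pw x

open Classical in
/-- Iterates (convolution powers) of the Markov kernel. -/
noncomputable def mkernelPow {V : Type*} (pw : V → ℝ) (ew : V → V → ℝ) : ℕ → V → V → ℝ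
  | 0 => fun x y => if x = y then 1 else 0
  | n + 1 => fun x y => ∑' z, mkernel pw ew x z * mkernelPow pw ew n z y

/-- The heat kernel (transition density) of the random walk. -/
noncomputable def mheat {V : Type*} (pw : V → ℝ) (ew : V → V → ℝ) (n : ℕ) (x y : V) : ℝ :=
  mkernelPow pw ew n x y / pw y

/-- A weighted graph: a simple connected graph with symmetric, adapted edge weights
subordinate to positive vertex weights. -/
structure WeightedGraph (V : Type*) where
  G : SimpleGraph V
  wV : V → ℝ
  wE : V → V → ℝ
  wV_pos : ∀ x, 0 < wV x
  wE_nonneg : ∀ x y, 0 ≤ wE x y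
  wE_symm : ∀ x y, wE x y = wE y x
  adapted : ∀ x y, 0 < wE x y ↔ G.Adj x y
  connected : G.Connected
  wE_summable : ∀ x, Summable fun y => wE x y
  subordinate : ∀ x, (∑' y, wE x y) ≤ wV x

namespace WeightedGraph

variable {V : Type*}

/-- Controlled weights with constant `Cc`. -/
def Controlled (Γ : WeightedGraph V) (Cc : ℝ) : Prop :=
  1 < Cc ∧ ∀ x y, Γ.G.Adj x y → Γ.wV x ≤ Cc * Γ.wE x y

/-- Uniformly lazy weights with constant `Ce`. -/
def UniformlyLazy (Γ : WeightedGraph V) (Ce : ℝ) : Prop :=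
  Ce ∈ Set.Ioo (0 : ℝ) 1 ∧ ∀ x, (∑' y, Γ.wE x y) ≤ (1 - Ce) * Γ.wV x

/-- Closed ball for the graph distance. -/
noncomputable def ball (Γ : WeightedGraph V) (x : V) (r : ℝ) : Set V :=
  {y | (Γ.G.dist x y : ℝ) ≤ r}

/-- Volume of a ball. -/
noncomputable def vol (Γ : WeightedGraph V) (x : V) (r : ℝ) : ℝ :=
  setSum (Γ.ball x r) Γ.wV

/-- Dirichlet energy of a function. -/
noncomputable def energy (Γ : WeightedGraph V) (f : V → ℝ) : ℝ :=
  (∑' x, ∑' y, (f x - f y) ^ 2 * Γ.wE x y) / 2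

/-- Squared `L²`-norm of a function. -/
noncomputable def sqnorm (Γ : WeightedGraph V) (f : V → ℝ) : ℝ :=
  ∑' x, f x ^ 2 * Γ.wV x

/-- The first Dirichlet eigenvalue of a finite set `Ω`. -/
noncomputable def lambda1 (Γ : WeightedGraph V) (Ω : Finset V) : ℝ :=
  sInf {q | ∃ f : V → ℝ, f ≠ 0 ∧ (∀ x, f x ≠ 0 → x ∈ Ω) ∧ q = Γ.energy f / Γ.sqnorm f}

/-- `Λ` is a relative Faber-Krahn function of `Γ`: for balls `B(z,r)` the map
`ν ↦ Λ z r ν` is non-increasing, and `λ₁(Ω) ≥ Λ(B, π(Ω))` for nonempty finite `Ω ⊆ B`. -/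
def IsRelFK (Γ : WeightedGraph V) (Λ : V → ℝ → ℝ → ℝ) : Prop :=
  (∀ z r ν₁ ν₂, 0 < ν₁ → ν₁ ≤ ν₂ → Λ z r ν₂ ≤ Λ z r ν₁) ∧
  ∀ z : V, ∀ r : ℝ, ∀ Ω : Finset V, Ω.Nonempty → (∀ x ∈ Ω, x ∈ Γ.ball z r) →
    Λ z r (∑ x ∈ Ω, Γ.wV x) ≤ Γ.lambda1 Ω

/-- The heat kernel of the weighted graph. -/
noncomputable def heatKernel (Γ : WeightedGraph V) : ℕ → V → V → ℝ :=
  mheat Γ.wV Γ.wE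

/-- `ε`-average of a function over closed balls of radius `ε`. -/
noncomputable def avg (Γ : WeightedGraph V) (ε : ℝ) (f : V → ℝ) (x : V) : ℝ :=
  setSum (Γ.ball x ε) (fun y => f y * Γ.wV y) / Γ.vol x ε

/-- `Φ` is a quasi-isometry between weighted graphs with constants `ε, a, b, Cq`. -/
structure IsQI {V₁ V₂ : Type*} (Γ₁ : WeightedGraph V₁) (Γ₂ : WeightedGraph V₂)
    (Φ : V₁ → V₂) (ε a b Cq : ℝ) : Prop where
  eps_pos : 0 < ε
  a_pos : 0 < a
  b_nonneg : 0 ≤ b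
  Cq_pos : 0 < Cq
  dense : ∀ z : V₂, ∃ x : V₁, (Γ₂.G.dist (Φ x) z : ℝ) ≤ ε
  dist_lower : ∀ x y : V₁, a⁻¹ * (Γ₁.G.dist x y : ℝ) - b ≤ (Γ₂.G.dist (Φ x) (Φ y) : ℝ)
  dist_upper : ∀ x y : V₁, (Γ₂.G.dist (Φ x) (Φ y) : ℝ) ≤ a * (Γ₁.G.dist x y : ℝ)
  weight_lower : ∀ x, Cq⁻¹ * Γ₁.wV x ≤ Γ₂.wV (Φ x)
  weight_upper : ∀ x, Γ₂.wV (Φ x) ≤ Cq * Γ₁.wV x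

end WeightedGraph

namespace HKCore

variable {ι : Type*} [Fintype ι]

/-- The (sub-)Markov operator on a finite set. -/
noncomputable def Kop (p : ι → ℝ) (m : ι → ι → ℝ) (v : ι → ℝ) : ι → ℝ :=
  fun x => (∑ y, m x y * v y) / p x

/-- Weighted inner product. -/
noncomputable def ip (p : ι → ℝ) (f g : ι → ℝ) : ℝ := ∑ x, f x * g x * p x

/-- Dirichlet form. -/
noncomputable def dform (p : ι → ℝ) (m : ι → ι → ℝ) (g : ι → ℝ) : ℝ :=
  ip p g g - ip p (Kop p m g) g

structure Core (p : ι → ℝ) (m : ι → ι → ℝ) (c : ℝ) : Prop where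
  c_pos : 0 < c
  c_lt : c < 1
  p_pos : ∀ x, 0 < p x
  m_nonneg : ∀ x y, 0 ≤ m x y
  m_symm : ∀ x y, m x y = m y x
  row : ∀ x, ∑ y, m x y ≤ p x
  diag : ∀ x, c * p x ≤ m x x

lemma cs_row (w a : ι → ℝ) (hw : ∀ y, 0 ≤ w y) {b : ℝ} (hb : ∑ y, w y ≤ b) :
    (∑ y, w y * a y) ^ 2 ≤ b * ∑ y, w y * a y ^ 2 := by
  have h := Finset.sum_sq_le_sum_mul_sum_of_sq_le_mul (Finset.univ : Finset ι)
    (r := fun y => w y * a y) (f := w) (g := fun y => w y * a y ^ 2)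
    (fun i _ => hw i) (fun i _ => mul_nonneg (hw i) (sq_nonneg _)) (fun i _ => le_of_eq (by ring))
  refine h.trans (mul_le_mul_of_nonneg_right hb ?_)
  exact Finset.sum_nonneg fun i _ => mul_nonneg (hw i) (sq_nonneg _)

lemma ip_comm (p f g : ι → ℝ) : ip p f g = ip p g f := by
  unfold ip; exact Finset.sum_congr rfl fun x _ => by ring

lemma ip_self_nonneg {p : ι → ℝ} (hp : ∀ x, 0 < p x) (f : ι → ℝ) : 0 ≤ ip p f f :=
  Finset.sum_nonneg fun x _ => mul_nonneg (mul_self_nonneg _) (hp x).le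

lemma ip_K {p : ι → ℝ} (hp : ∀ x, 0 < p x) (m : ι → ι → ℝ) (f g : ι → ℝ) :
    ip p (Kop p m f) g = ∑ x, ∑ y, m x y * f y * g x := by
  unfold ip Kop
  refine Finset.sum_congr rfl fun x _ => ?_
  have := (hp x).ne'
  rw [← Finset.sum_mul]
  field_simp

lemma ip_K_symm {p : ι → ℝ} (hp : ∀ x, 0 < p x) {m : ι → ι → ℝ} (hm : ∀ x y, m x y = m y x)
    (f g : ι → ℝ) : ip p (Kop p m f) g = ip p f (Kop p m g) := by
  rw [ip_comm p f, ip_K hp, ip_K hp, Finset.sum_comm]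
  refine Finset.sum_congr rfl fun x _ => Finset.sum_congr rfl fun y _ => ?_
  rw [hm y x]; ring

lemma ip_K_iter {p : ι → ℝ} (hp : ∀ x, 0 < p x) {m : ι → ι → ℝ} (hm : ∀ x y, m x y = m y x)
    (n : ℕ) (f g : ι → ℝ) : ip p ((Kop p m)^[n] f) g = ip p f ((Kop p m)^[n] g) := by
  induction n generalizing f g with
  | zero => rfl
  | succ n ih =>
    rw [Function.iterate_succ_apply, ih, ip_K_symm hp hm, ← Function.iterate_succ_apply' (Kop p m)]

/-- kernels `k` with row sums `≤ b p` have norm `≤ b`. -/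
lemma contraction {p : ι → ℝ} (hp : ∀ x, 0 < p x) {m : ι → ι → ℝ} (hm : ∀ x y, m x y = m y x)
    (h0 : ∀ x y, 0 ≤ m x y) {b : ℝ} (hb0 : 0 ≤ b) (hb : ∀ x, ∑ y, m x y ≤ b * p x) (g : ι → ℝ) :
    ip p (Kop p m g) (Kop p m g) ≤ b ^ 2 * ip p g g := by
  have h1 : ip p (Kop p m g) (Kop p m g) ≤ ∑ x, b * ∑ y, m x y * g y ^ 2 := by
    unfold ip Kop
    refine Finset.sum_le_sum fun x _ => ?_
    have hx := hp x
    have := cs_row (m x) g (h0 x) (hb x)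
    have e : (∑ y, m x y * g y) / p x * ((∑ y, m x y * g y) / p x) * p x
        = (∑ y, m x y * g y) ^ 2 / p x := by field_simp
    rw [e, div_le_iff₀ hx]
    linarith
  refine h1.trans ?_
  rw [← Finset.mul_sum, Finset.sum_comm, pow_two, mul_assoc]
  refine mul_le_mul_of_nonneg_left ?_ hb0
  unfold ip
  rw [Finset.mul_sum]
  refine Finset.sum_le_sum fun y _ => ?_
  rw [← Finset.sum_mul]
  have : ∑ x, m x y ≤ b * p y := by
    rw [Finset.sum_congr rfl fun x _ => hm x y]; exact hb y
  nlinarith [sq_nonneg (g y), mul_le_mul_of_nonneg_right this (sq_nonneg (g y))]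

lemma ip_add_left (p f g h : ι → ℝ) : ip p (f + g) h = ip p f h + ip p g h := by
  unfold ip; rw [← Finset.sum_add_distrib]
  exact Finset.sum_congr rfl fun x _ => by simp only [Pi.add_apply]; ring

lemma ip_sub_left (p f g h : ι → ℝ) : ip p (f - g) h = ip p f h - ip p g h := by
  unfold ip; rw [← Finset.sum_sub_distrib]
  exact Finset.sum_congr rfl fun x _ => by simp only [Pi.sub_apply]; ring

lemma ip_smul_left (p f h : ι → ℝ) (a : ℝ) : ip p (a • f) h = a * ip p f h := by
  unfold ip; rw [Finset.mul_sum]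
  exact Finset.sum_congr rfl fun x _ => by simp only [Pi.smul_apply, smul_eq_mul]; ring

lemma ip_add_right (p f g h : ι → ℝ) : ip p h (f + g) = ip p h f + ip p h g := by
  rw [ip_comm, ip_add_left, ip_comm p f, ip_comm p g]

lemma ip_sub_right (p f g h : ι → ℝ) : ip p h (f - g) = ip p h f - ip p h g := by
  rw [ip_comm, ip_sub_left, ip_comm p f, ip_comm p g]

lemma ip_smul_right (p f h : ι → ℝ) (a : ℝ) : ip p h (a • f) = a * ip p h f := by
  rw [ip_comm, ip_smul_left, ip_comm]

variable {p : ι → ℝ} {m : ι → ι → ℝ} {c : ℝ}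

lemma dform_nonneg (hc : Core p m c) (g : ι → ℝ) : 0 ≤ dform p m g := by
  unfold dform
  have h1 := contraction hc.p_pos hc.m_symm hc.m_nonneg zero_le_one
    (by simpa using hc.row) g
  have h2 := ip_self_nonneg hc.p_pos (g - Kop p m g)
  simp only [ip_sub_left, ip_sub_right] at h2
  rw [ip_comm p g (Kop p m g)] at h2
  linarith

/-- Laziness: `‖Kg‖² ≤ ‖g‖² - 2 c D(g)`. -/
lemma lazy_norm (hc : Core p m c) (g : ι → ℝ) :
    ip p (Kop p m g) (Kop p m g) ≤ ip p g g - 2 * c * dform p m g := by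
  classical
  set m' : ι → ι → ℝ := fun x y => m x y - (if x = y then c * p x else 0) with hm'
  have hK : Kop p m g = c • g + Kop p m' g := by
    funext x
    have hx := (hc.p_pos x).ne'
    simp only [Kop, hm', Pi.add_apply, Pi.smul_apply, smul_eq_mul, sub_mul,
      Finset.sum_sub_distrib, ite_mul, zero_mul, Finset.sum_ite_eq, Finset.mem_univ, if_true]
    field_simp
    ring
  have h1 : ip p (Kop p m' g) (Kop p m' g) ≤ (1 - c) ^ 2 * ip p g g := by
    refine contraction hc.p_pos ?_ ?_ (by linarith [hc.c_lt]) ?_ g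
    · intro x y
      simp only [hm', hc.m_symm x y]
      by_cases h : x = y
      · subst h; rfl
      · simp [h, Ne.symm h]
    · intro x y
      simp only [hm']
      by_cases h : x = y
      · subst h; simpa using hc.diag x
      · simpa [h] using hc.m_nonneg x y
    · intro x
      simp only [hm', Finset.sum_sub_distrib, Finset.sum_ite_eq, Finset.mem_univ, if_true]
      linarith [hc.row x]
  unfold dform
  rw [hK]
  simp only [ip_add_left, ip_add_right, ip_smul_left, ip_smul_right]
  rw [ip_comm p g (Kop p m' g)]
  nlinarith

lemma key (hc : Core p m c) (φ v : ι → ℝ) :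
    ip p (φ * Kop p m v) (φ * Kop p m v) + c * dform p m (φ * v) ≤
      ip p (φ * v) (φ * v) +
        (2 + 2 / c) * ∑ x, ∑ y, m x y * (φ x - φ y) ^ 2 * v y ^ 2 := by
  set Q := ∑ x, ∑ y, m x y * (φ x - φ y) ^ 2 * v y ^ 2 with hQ
  set g := φ * v with hg
  set k := φ * Kop p m v - Kop p m g with hk
  have hcp := hc.c_pos
  have hkx : ∀ x, k x = (∑ y, m x y * ((φ x - φ y) * v y)) / p x := by
    intro x
    simp only [hk, hg, Kop, Pi.sub_apply, Pi.mul_apply]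
    rw [← mul_div_assoc, ← sub_div, Finset.mul_sum, ← Finset.sum_sub_distrib]
    congr 1
    exact Finset.sum_congr rfl fun y _ => by ring
  have hkk : ip p k k ≤ Q := by
    unfold ip
    refine Finset.sum_le_sum fun x _ => ?_
    have hx := hc.p_pos x
    have := cs_row (m x) (fun y => (φ x - φ y) * v y) (hc.m_nonneg x) (hc.row x)
    have e : k x * k x * p x = (∑ y, m x y * ((φ x - φ y) * v y)) ^ 2 / p x := by
      rw [hkx]; field_simp
    rw [e, div_le_iff₀ hx, mul_comm]
    refine this.trans (le_of_eq ?_)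
    congr 1
    exact Finset.sum_congr rfl fun y _ => by ring
  have hgk : ip p g k ≤ Q / 2 := by
    have e1 : ip p g k = ∑ x, ∑ y, m x y * (φ x - φ y) * φ x * v x * v y := by
      unfold ip
      refine Finset.sum_congr rfl fun x _ => ?_
      have hx := (hc.p_pos x).ne'
      rw [hkx]
      have : g x * ((∑ y, m x y * ((φ x - φ y) * v y)) / p x) * p x
        = g x * ∑ y, m x y * ((φ x - φ y) * v y) := by field_simp
      rw [this, Finset.mul_sum]
      exact Finset.sum_congr rfl fun y _ => by simp only [hg, Pi.mul_apply]; ring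
    have e2 : ip p g k = ∑ x, ∑ y, m x y * (φ y - φ x) * φ y * v x * v y := by
      rw [e1, Finset.sum_comm]
      refine Finset.sum_congr rfl fun x _ => Finset.sum_congr rfl fun y _ => ?_
      rw [hc.m_symm y x]; ring
    have e3 : ip p g k + ip p g k = ∑ x, ∑ y, m x y * (φ x - φ y) ^ 2 * (v x * v y) := by
      nth_rewrite 1 [e1]
      rw [e2]
      simp only [← Finset.sum_add_distrib]
      exact Finset.sum_congr rfl fun x _ => Finset.sum_congr rfl fun y _ => by ring
    have e4 : Q = ∑ x, ∑ y, m x y * (φ x - φ y) ^ 2 * v x ^ 2 := by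
      rw [hQ, Finset.sum_comm]
      refine Finset.sum_congr rfl fun x _ => Finset.sum_congr rfl fun y _ => ?_
      rw [hc.m_symm y x]; ring
    have e5 : (ip p g k + ip p g k) + (ip p g k + ip p g k) ≤ Q + Q := by
      nth_rewrite 1 [e4]
      rw [e3, hQ]
      simp only [← Finset.sum_add_distrib]
      refine Finset.sum_le_sum fun x _ => Finset.sum_le_sum fun y _ => ?_
      have := mul_nonneg (hc.m_nonneg x y) (sq_nonneg (φ x - φ y))
      nlinarith [mul_nonneg this (sq_nonneg (v x - v y))]
    linarith
  have hD := dform_nonneg hc g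
  have hlazy := lazy_norm hc g
  have hIK : ip p (g - Kop p m g) (g - Kop p m g) ≤ 2 * dform p m g := by
    simp only [ip_sub_left, ip_sub_right]
    rw [ip_comm p g (Kop p m g)]
    have : 0 ≤ c * dform p m g := mul_nonneg hcp.le hD
    unfold dform at *
    nlinarith
  have hτ : 0 ≤ (c / 2) * ip p (g - Kop p m g) (g - Kop p m g)
      + 2 * ip p (g - Kop p m g) k + (2 / c) * ip p k k := by
    have := ip_self_nonneg hc.p_pos ((c / 2) • (g - Kop p m g) + k)
    rw [ip_add_left, ip_add_right, ip_add_right, ip_smul_left, ip_smul_left, ip_smul_right,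
      ip_smul_right, ip_comm p k] at this
    have h2 : 0 ≤ (2 / c) * (c / 2 * (c / 2 * ip p (g - Kop p m g) (g - Kop p m g)) +
      c / 2 * ip p (g - Kop p m g) k + (c / 2 * ip p (g - Kop p m g) k + ip p k k)) :=
      mul_nonneg (by positivity) this
    refine h2.trans (le_of_eq ?_)
    field_simp
    ring
  have hexp : φ * Kop p m v = Kop p m g + k := by rw [hk]; ring
  rw [hexp]
  simp only [ip_add_left, ip_add_right]
  rw [ip_comm p k (Kop p m g)]
  rw [ip_sub_left p g (Kop p m g) k] at hτ
  have hQ2 : (2 / c) * ip p k k ≤ (2 / c) * Q := mul_le_mul_of_nonneg_left hkk (by positivity)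
  nlinarith

end HKCore

namespace HKCore

variable {ι : Type*} [Fintype ι] {p : ι → ℝ} {m : ι → ι → ℝ} {c : ℝ}

lemma davies_step (hc : Core p m c) {κ : ℝ} (w : ι → ℝ)
    (hw : ∀ x y, m x y ≠ 0 → (w x - w y) ^ 2 ≤ κ * w y ^ 2) (hκ : 0 ≤ κ) (v : ι → ℝ) :
    ip p (w * Kop p m v) (w * Kop p m v) ≤ (1 + (2 + 2 / c) * κ) * ip p (w * v) (w * v) := by
  have h := key hc w v
  have hD := mul_nonneg hc.c_pos.le (dform_nonneg hc (w * v))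
  have hcp := hc.c_pos
  have hQ : ∑ x, ∑ y, m x y * (w x - w y) ^ 2 * v y ^ 2 ≤ κ * ip p (w * v) (w * v) := by
    rw [Finset.sum_comm]
    unfold ip
    rw [Finset.mul_sum]
    refine Finset.sum_le_sum fun y _ => ?_
    calc ∑ x, m x y * (w x - w y) ^ 2 * v y ^ 2 ≤ ∑ x, m y x * (κ * w y ^ 2 * v y ^ 2) := by
          refine Finset.sum_le_sum fun x _ => ?_
          rw [hc.m_symm y x]
          by_cases h0 : m x y = 0
          · simp [h0]
          · rw [mul_assoc]
            exact mul_le_mul_of_nonneg_left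
              (mul_le_mul_of_nonneg_right (hw x y h0) (sq_nonneg _)) (hc.m_nonneg x y)
      _ = (∑ x, m y x) * (κ * w y ^ 2 * v y ^ 2) := by rw [Finset.sum_mul]
      _ ≤ p y * (κ * w y ^ 2 * v y ^ 2) :=
          mul_le_mul_of_nonneg_right (hc.row y) (by positivity)
      _ = κ * ((w * v) y * (w * v) y * p y) := by simp only [Pi.mul_apply]; ring
  have := mul_le_mul_of_nonneg_left hQ (show 0 ≤ 2 + 2 / c by positivity)
  linarith

lemma davies (hc : Core p m c) {κ : ℝ} (w : ι → ℝ)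
    (hw : ∀ x y, m x y ≠ 0 → (w x - w y) ^ 2 ≤ κ * w y ^ 2) (hκ : 0 ≤ κ) (v : ι → ℝ) (s : ℕ) :
    ip p (w * (Kop p m)^[s] v) (w * (Kop p m)^[s] v) ≤
      (1 + (2 + 2 / c) * κ) ^ s * ip p (w * v) (w * v) := by
  have hcp := hc.c_pos
  induction s with
  | zero => simp
  | succ s ih =>
    rw [Function.iterate_succ_apply', pow_succ']
    refine (davies_step hc w hw hκ _).trans ?_
    rw [mul_assoc]
    exact mul_le_mul_of_nonneg_left ih (by positivity)

/-- Local square norm on the set `d ≤ ρ`. -/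
noncomputable def loc (p d : ι → ℝ) (ρ : ℝ) (v : ι → ℝ) : ℝ :=
  ∑ z, if d z ≤ ρ then v z ^ 2 * p z else 0

/-- Positive part above a level. -/
noncomputable def pos (θ : ℝ) (u : ι → ℝ) : ι → ℝ := fun z => max (u z - θ) 0

/-- Cutoff function. -/
noncomputable def cut (d : ι → ℝ) (ρ δ : ℝ) : ι → ℝ := fun z => max 0 (min 1 ((ρ - d z) / δ))

lemma cut_lip (d : ι → ℝ) (ρ : ℝ) {δ : ℝ} (hδ : 0 < δ) (x y : ι) (h : |d x - d y| ≤ 1) :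
    (cut d ρ δ x - cut d ρ δ y) ^ 2 ≤ 1 / δ ^ 2 := by
  have h1 : |cut d ρ δ x - cut d ρ δ y| ≤ |(ρ - d x) / δ - (ρ - d y) / δ| := by
    unfold cut
    have a1 := abs_max_sub_max_le_abs (min 1 ((ρ - d x) / δ)) (min 1 ((ρ - d y) / δ)) 0
    have a2 := abs_min_sub_min_le_max 1 ((ρ - d x) / δ) 1 ((ρ - d y) / δ)
    rw [max_comm 0, max_comm 0]
    refine a1.trans (a2.trans ?_)
    simp
  have h2 : |(ρ - d x) / δ - (ρ - d y) / δ| ≤ 1 / δ := by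
    rw [← sub_div, abs_div, abs_of_pos hδ]
    gcongr
    rw [abs_sub_comm] at h
    have e : ρ - d x - (ρ - d y) = d y - d x := by ring
    rw [e]
    exact h
  have := h1.trans h2
  rw [← sq_abs, ← one_div_pow]
  exact pow_le_pow_left₀ (abs_nonneg _) this 2

lemma pos_sub (hc : Core p m c) {θ : ℝ} (hθ : 0 ≤ θ) (u : ι → ℝ) (x : ι) :
    pos θ (Kop p m u) x ≤ Kop p m (pos θ u) x := by
  have hx := hc.p_pos x
  have h0 : 0 ≤ Kop p m (pos θ u) x :=
    div_nonneg (Finset.sum_nonneg fun y _ => mul_nonneg (hc.m_nonneg x y) (le_max_right _ _)) hx.le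
  refine max_le ?_ h0
  have : ∑ y, m x y * u y ≤ ∑ y, m x y * pos θ u y + p x * θ := by
    have h1 : ∑ y, m x y * u y ≤ ∑ y, (m x y * pos θ u y + m x y * θ) := by
      refine Finset.sum_le_sum fun y _ => ?_
      rw [← mul_add]
      refine mul_le_mul_of_nonneg_left ?_ (hc.m_nonneg x y)
      have : u y - θ ≤ pos θ u y := le_max_left _ _
      linarith
    rw [Finset.sum_add_distrib, ← Finset.sum_mul] at h1
    have := mul_le_mul_of_nonneg_right (hc.row x) hθ
    linarith
  unfold Kop
  rw [sub_le_iff_le_add, div_le_iff₀ hx, add_mul, div_mul_cancel₀ _ hx.ne']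
  linarith

lemma cutQ (hc : Core p m c) {d : ι → ℝ} (hd : ∀ x y, m x y ≠ 0 → |d x - d y| ≤ 1)
    {ρ δ : ℝ} (hδ : 0 < δ) (v : ι → ℝ) :
    ∑ x, ∑ y, m x y * (cut d (ρ - 1) δ x - cut d (ρ - 1) δ y) ^ 2 * v y ^ 2
      ≤ 1 / δ ^ 2 * loc p d ρ v := by
  rw [Finset.sum_comm]
  unfold loc
  rw [Finset.mul_sum]
  refine Finset.sum_le_sum fun y _ => ?_
  split_ifs with hy
  · calc ∑ x, m x y * (cut d (ρ - 1) δ x - cut d (ρ - 1) δ y) ^ 2 * v y ^ 2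
        ≤ ∑ x, m y x * (1 / δ ^ 2 * v y ^ 2) := by
          refine Finset.sum_le_sum fun x _ => ?_
          rw [hc.m_symm y x]
          by_cases h0 : m x y = 0
          · simp [h0]
          · rw [mul_assoc]
            exact mul_le_mul_of_nonneg_left
              (mul_le_mul_of_nonneg_right (cut_lip d _ hδ x y (hd x y h0)) (sq_nonneg _))
              (hc.m_nonneg x y)
      _ = (∑ x, m y x) * (1 / δ ^ 2 * v y ^ 2) := by rw [Finset.sum_mul]
      _ ≤ p y * (1 / δ ^ 2 * v y ^ 2) :=
          mul_le_mul_of_nonneg_right (hc.row y) (by positivity)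
      _ = 1 / δ ^ 2 * (v y ^ 2 * p y) := by ring
  · push Not at hy
    rw [mul_zero]
    refine (Finset.sum_eq_zero fun x _ => ?_).le
    by_cases h0 : m x y = 0
    · simp [h0]
    · have h1 := abs_le.1 (hd x y h0)
      have cz : ∀ z, ρ - 1 - d z ≤ 0 → cut d (ρ - 1) δ z = 0 := by
        intro z hz
        unfold cut
        exact max_eq_left ((min_le_right _ _).trans (div_nonpos_of_nonpos_of_nonneg hz hδ.le))
      rw [cz x (by linarith), cz y (by linarith)]
      simp

/-- One step of the De Giorgi iteration. -/
lemma step (hc : Core p m c) {d : ι → ℝ} (hd : ∀ x y, m x y ≠ 0 → |d x - d y| ≤ 1)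
    {R ρ ρ' δ θ h Y Λ ν : ℝ} (hδ : 0 < δ) (hρR : ρ ≤ R) (hρ : ρ' + δ ≤ ρ - 1)
    (hθ : 0 ≤ θ) (hh : 0 < h) (hY : 0 < Y) (hΛ : 0 < Λ) (hν : Y ≤ ν * h ^ 2)
    (hFK : ∀ g : ι → ℝ, (∀ z, g z ≠ 0 → d z ≤ R) →
      (∑ z, if g z ≠ 0 then p z else 0) ≤ ν → Λ * ip p g g ≤ dform p m g)
    (u : ι → ℝ) (s0 J : ℕ)
    (hyp : ∀ j ≤ J, loc p d ρ (pos θ ((Kop p m)^[s0 + j] u)) ≤ Y) :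
    loc p d ρ' (pos (θ + h) ((Kop p m)^[s0 + J] u)) ≤
      Y / (1 + J * (c * Λ)) + (2 + 2 / c) * (1 / δ ^ 2) * Y / (c * Λ) := by
  classical
  have hcp := hc.c_pos
  set φ := cut d (ρ - 1) δ with hφ
  set v : ℕ → ι → ℝ := fun j => pos (θ + h) ((Kop p m)^[s0 + j] u) with hv
  set ε := (2 + 2 / c) * (1 / δ ^ 2) * Y with hε
  have hε0 : 0 < ε := by positivity
  set β := c * Λ with hβ
  have hβ0 : 0 < β := by positivity
  set y : ℕ → ℝ := fun j => ip p (φ * v j) (φ * v j) with hy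
  have hy0 : ∀ j, 0 ≤ y j := fun j => ip_self_nonneg hc.p_pos _
  have hφ0 : ∀ z, 0 ≤ φ z := fun z => le_max_left _ _
  have hφ1 : ∀ z, φ z ≤ 1 := fun z => max_le zero_le_one (min_le_left _ _)
  have hφs : ∀ z, φ z ≠ 0 → d z ≤ ρ := by
    intro z hz
    by_contra hcon
    push Not at hcon
    apply hz
    exact max_eq_left ((min_le_right _ _).trans
      (div_nonpos_of_nonpos_of_nonneg (by linarith) hδ.le))
  have hv0 : ∀ j z, 0 ≤ v j z := fun j z => le_max_right _ _
  have hvle : ∀ j z, v j z ≤ pos θ ((Kop p m)^[s0 + j] u) z := by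
    intro j z
    exact max_le_max (by linarith) le_rfl
  have hloc : ∀ j ≤ J, loc p d ρ (v j) ≤ Y := by
    intro j hj
    refine le_trans ?_ (hyp j hj)
    unfold loc
    refine Finset.sum_le_sum fun z _ => ?_
    split_ifs
    · exact mul_le_mul_of_nonneg_right (pow_le_pow_left₀ (hv0 j z) (hvle j z) 2) (hc.p_pos z).le
    · exact le_rfl
  -- y ≤ Y
  have hyY : ∀ j ≤ J, y j ≤ Y := by
    intro j hj
    refine le_trans ?_ (hloc j hj)
    unfold loc
    refine Finset.sum_le_sum fun z _ => ?_
    have hpz := (hc.p_pos z).le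
    split_ifs with hz
    · simp only [Pi.mul_apply]
      refine mul_le_mul_of_nonneg_right ?_ hpz
      have : φ z ^ 2 ≤ 1 := pow_le_one₀ (hφ0 z) (hφ1 z)
      nlinarith [sq_nonneg (v j z)]
    · have : φ z = 0 := by
        by_contra hcon
        exact hz (hφs z hcon)
      simp [this]
  -- support volume
  have hsupp : ∀ j ≤ J, (∑ z, if (φ * v j) z ≠ 0 then p z else 0) ≤ ν := by
    intro j hj
    have h1 : (∑ z, if (φ * v j) z ≠ 0 then p z else 0) * h ^ 2 ≤ Y := by
      refine le_trans ?_ (hyp j hj)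
      unfold loc
      rw [Finset.sum_mul]
      refine Finset.sum_le_sum fun z _ => ?_
      have hpz := (hc.p_pos z).le
      by_cases hz : (φ * v j) z ≠ 0
      · rw [if_pos hz]
        simp only [Pi.mul_apply] at hz
        have hz1 := left_ne_zero_of_mul hz
        have hz2 := right_ne_zero_of_mul hz
        rw [if_pos (hφs z hz1), mul_comm]
        refine mul_le_mul_of_nonneg_right ?_ hpz
        have h3 : 0 < v j z := lt_of_le_of_ne (hv0 j z) (Ne.symm hz2)
        have h4 : 0 < (Kop p m)^[s0 + j] u z - (θ + h) := by
          by_contra hcon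
          push Not at hcon
          exact h3.ne' (max_eq_right hcon)
        refine pow_le_pow_left₀ hh.le ?_ 2
        exact le_trans (by linarith) (le_max_left _ _)
      · rw [if_neg hz, zero_mul]
        split_ifs
        · positivity
        · exact le_rfl
    have h2 := h1.trans hν
    exact le_of_mul_le_mul_right h2 (by positivity)
  have hFKj : ∀ j ≤ J, Λ * y j ≤ dform p m (φ * v j) := by
    intro j hj
    refine hFK _ ?_ (hsupp j hj)
    intro z hz
    exact (hφs z (left_ne_zero_of_mul hz)).trans hρR
  have hrec : ∀ j, j + 1 ≤ J → y (j + 1) ≤ (1 - β) * y j + ε := by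
    intro j hj
    have h1 := key hc φ (v j)
    have h2 := cutQ (ρ := ρ) hc hd hδ (v j)
    have h3 : y (j + 1) ≤ ip p (φ * Kop p m (v j)) (φ * Kop p m (v j)) := by
      simp only [hy]
      unfold ip
      refine Finset.sum_le_sum fun z _ => ?_
      have hpz := (hc.p_pos z).le
      refine mul_le_mul_of_nonneg_right ?_ hpz
      have h4 : (φ * v (j + 1)) z ≤ (φ * Kop p m (v j)) z := by
        simp only [Pi.mul_apply]
        refine mul_le_mul_of_nonneg_left ?_ (hφ0 z)
        have := pos_sub hc (θ := θ + h) (by linarith) ((Kop p m)^[s0 + j] u) z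
        rw [← Function.iterate_succ_apply' (Kop p m)] at this
        exact this
      have h5 : 0 ≤ (φ * v (j + 1)) z := mul_nonneg (hφ0 z) (hv0 _ z)
      exact mul_self_le_mul_self h5 h4
    have h4 := mul_le_mul_of_nonneg_left (hFKj j (by omega)) hcp.le
    have h5 : (2 + 2 / c) * ∑ x, ∑ y, m x y * (φ x - φ y) ^ 2 * v j y ^ 2 ≤ ε := by
      rw [hε, mul_assoc]
      refine mul_le_mul_of_nonneg_left ?_ (by positivity)
      exact h2.trans (mul_le_mul_of_nonneg_left (hloc j (by omega)) (by positivity))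
    have h6 : y j = ip p (φ * v j) (φ * v j) := rfl
    rw [hβ]
    nlinarith
  -- conclusion for y
  have hfin : y J ≤ Y / (1 + J * β) + ε / β := by
    have hrhs : 0 ≤ Y / (1 + J * β) + ε / β := by positivity
    by_cases hβ1 : β ≤ 1
    · have hind : ∀ j ≤ J, y j ≤ (1 - β) ^ j * Y + ε / β := by
        intro j
        induction j with
        | zero =>
          intro hj
          have := hyY 0 hj
          have : 0 ≤ ε / β := by positivity
          simp; linarith
        | succ j ih =>
          intro hj
          refine (hrec j hj).trans ?_
          have := mul_le_mul_of_nonneg_left (ih (by omega)) (sub_nonneg.2 hβ1)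
          have e : (1 - β) * ((1 - β) ^ j * Y + ε / β) + ε = (1 - β) ^ (j + 1) * Y + ε / β := by
            field_simp
            ring
          linarith
      refine (hind J le_rfl).trans ?_
      have hb : (1 - β) ^ J * (1 + J * β) ≤ 1 := by
        have h1 : 1 + J * β ≤ (1 + β) ^ J := one_add_mul_le_pow (by linarith) J
        calc (1 - β) ^ J * (1 + J * β) ≤ (1 - β) ^ J * (1 + β) ^ J :=
              mul_le_mul_of_nonneg_left h1 (pow_nonneg (sub_nonneg.2 hβ1) J)
          _ = (1 - β ^ 2) ^ J := by rw [← mul_pow]; congr 1; ring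
          _ ≤ 1 := pow_le_one₀ (by nlinarith) (by nlinarith)
      have : (1 - β) ^ J * Y ≤ Y / (1 + J * β) := by
        rw [le_div_iff₀ (by positivity)]
        nlinarith
      linarith
    · have : y J = 0 := by
        by_contra hne
        apply hβ1
        have hex : ∃ z, (φ * v J) z ≠ 0 := by
          by_contra hcon
          push Not at hcon
          apply hne
          simp only [hy]
          unfold ip
          exact Finset.sum_eq_zero fun z _ => by rw [hcon z]; simp
        obtain ⟨z, hz⟩ := hex
        have hzR := (hφs z (left_ne_zero_of_mul hz)).trans hρR
        have hpz := hc.p_pos z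
        have h1 := hFK (fun a => if a = z then 1 else 0) (by
          intro a ha
          have : a = z := by
            by_contra hcon
            exact ha (by simp [hcon])
          rw [this]; exact hzR) (by
          refine le_trans ?_ (hsupp J le_rfl)
          refine Finset.sum_le_sum fun a _ => ?_
          by_cases haz : a = z
          · subst haz; rw [if_pos hz]; simp
          · simp only [haz, if_false, ne_eq, not_true_eq_false]
            split_ifs
            · exact le_rfl
            · exact (hc.p_pos a).le)
        have e1 : ip p (fun a => if a = z then (1:ℝ) else 0) (fun a => if a = z then 1 else 0)
            = p z := by
          simp [ip]
        have e2 : dform p m (fun a => if a = z then (1:ℝ) else 0) = p z - m z z := by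
          unfold dform
          rw [e1, ip_K hc.p_pos]
          simp
        rw [e1, e2] at h1
        have h2 := hc.m_nonneg z z
        have h3 : Λ ≤ 1 := by
          have : Λ * p z ≤ 1 * p z := by linarith
          exact le_of_mul_le_mul_right this hpz
        rw [hβ]
        nlinarith [hc.c_lt]
      rw [this]; exact hrhs
  refine le_trans ?_ hfin
  simp only [hy]
  unfold loc ip
  refine Finset.sum_le_sum fun z _ => ?_
  have hpz := (hc.p_pos z).le
  split_ifs with hz
  · have : φ z = 1 := by
      have h1 : 1 ≤ (ρ - 1 - d z) / δ := by
        rw [le_div_iff₀ hδ]; linarith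
      rw [hφ]
      unfold cut
      rw [min_eq_left h1]; simp
    refine le_of_eq ?_
    simp only [Pi.mul_apply, this, hv]
    ring
  · simp only [Pi.mul_apply]
    exact mul_nonneg (mul_self_nonneg _) hpz

end HKCore

namespace HKCore

lemma exists_const {c C α A : ℝ} (hc : 0 < c) (hC : 0 < C) (hα : 0 < α) (hA : 0 < A) :
    ∃ η q : ℝ, 0 < η ∧ 0 < q ∧ (∀ k : ℕ, η * (64 * 4 ^ k / C) ^ (1 / α) ≤ q ^ k) ∧
      ∀ k : ℕ, q * 4 ^ k * (12 + 64 * A) ≤ c * C * (q ^ k / (4 ^ (k + 1) * η)) ^ α := by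
  set q : ℝ := (4 : ℝ) ^ (1 + 1 / α) with hq
  have hq0 : 0 < q := by positivity
  set X : ℝ := c * C / (q * (12 + 64 * A)) with hX
  have hX0 : 0 < X := by positivity
  set η : ℝ := min (((64 / C) ^ (1 / α))⁻¹) (X ^ (1 / α) / 4) with hη
  have hη0 : 0 < η := by
    rw [hη]
    refine lt_min ?_ ?_ <;> positivity
  refine ⟨η, q, hη0, hq0, ?_, ?_⟩
  · intro k
    have e : (64 * 4 ^ k / C : ℝ) ^ (1 / α) = (64 / C) ^ (1 / α) * ((4 : ℝ) ^ (1 / α)) ^ k := by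
      rw [mul_div_right_comm, Real.mul_rpow (by positivity) (by positivity)]
      congr 1
      rw [← Real.rpow_natCast, ← Real.rpow_natCast, ← Real.rpow_mul (by norm_num),
        ← Real.rpow_mul (by norm_num), mul_comm]
    rw [e, ← mul_assoc]
    have h1 : η * (64 / C) ^ (1 / α) ≤ 1 := by
      have h2 : η ≤ ((64 / C) ^ (1 / α))⁻¹ := min_le_left _ _
      have h3 : 0 < (64 / C : ℝ) ^ (1 / α) := by positivity
      calc η * (64 / C) ^ (1 / α) ≤ ((64 / C) ^ (1 / α))⁻¹ * (64 / C) ^ (1 / α) :=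
            mul_le_mul_of_nonneg_right h2 h3.le
        _ = 1 := inv_mul_cancel₀ h3.ne'
    have h2 : ((4 : ℝ) ^ (1 / α)) ^ k ≤ q ^ k := by
      refine pow_le_pow_left₀ (by positivity) ?_ k
      exact Real.rpow_le_rpow_of_exponent_le (by norm_num) (by linarith)
    calc η * (64 / C) ^ (1 / α) * ((4 : ℝ) ^ (1 / α)) ^ k ≤ 1 * ((4 : ℝ) ^ (1 / α)) ^ k :=
          mul_le_mul_of_nonneg_right h1 (by positivity)
      _ ≤ q ^ k := by rw [one_mul]; exact h2
  · intro k
    have e1 : (q ^ k / (4 ^ (k + 1) * η)) ^ α = 4 ^ k / (4 * η) ^ α := by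
      have e2 : q ^ k / (4 ^ (k + 1) * η) = ((4 : ℝ) ^ (1 / α)) ^ k / (4 * η) := by
        rw [hq, Real.rpow_add (by norm_num), Real.rpow_one, mul_pow, pow_succ]
        field_simp
      rw [e2, Real.div_rpow (by positivity) (by positivity)]
      congr 1
      rw [← Real.rpow_natCast, ← Real.rpow_natCast, ← Real.rpow_mul (by positivity),
        ← Real.rpow_mul (by positivity)]
      congr 1
      field_simp
    rw [e1]
    have h1 : (4 * η) ^ α ≤ X := by
      have h2 : η ≤ X ^ (1 / α) / 4 := min_le_right _ _
      calc (4 * η) ^ α ≤ (X ^ (1 / α)) ^ α :=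
            Real.rpow_le_rpow (by positivity) (by linarith) hα.le
        _ = X := by rw [← Real.rpow_mul hX0.le, one_div_mul_cancel hα.ne', Real.rpow_one]
    have h3 : 0 < (4 * η) ^ α := by positivity
    rw [hX, le_div_iff₀ (by positivity)] at h1
    rw [← mul_div_assoc, le_div_iff₀ h3]
    have h4 : (0 : ℝ) < 4 ^ k := by positivity
    nlinarith [mul_le_mul_of_nonneg_left h1 h4.le]

variable {ι : Type*} [Fintype ι] {p : ι → ℝ} {m : ι → ι → ℝ} {c : ℝ}

/-- Faber-Krahn property on the finite model. -/
def FK (p : ι → ℝ) (m : ι → ι → ℝ) (d : ι → ℝ) (n : ℕ) (C F α : ℝ) : Prop :=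
  ∀ g : ι → ℝ, (∀ z, g z ≠ 0 → d z ≤ Real.sqrt n) → ∀ ν : ℝ, 0 < ν →
    (∑ z, if g z ≠ 0 then p z else 0) ≤ ν → C / n * (F / ν) ^ α * ip p g g ≤ dform p m g

set_option maxHeartbeats 1000000 in
lemma iteration (hc : Core p m c) {d : ι → ℝ} (hd : ∀ x y, m x y ≠ 0 → |d x - d y| ≤ 1)
    {n t : ℕ} (hn : 1 ≤ n) (ht : 64 ≤ n → n ≤ 3 * t)
    {C F α η q θ : ℝ} (hC : 0 < C) (hF : 0 < F) (hη : 0 < η) (hq : 0 < q) (hθ : 0 < θ)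
    (hb : ∀ k : ℕ, q * 4 ^ k * (12 + 64 * (2 + 2 / c)) ≤
      c * C * (q ^ k / (4 ^ (k + 1) * η)) ^ α)
    (hFK : FK p m d n C F α) (u : ι → ℝ)
    (hM : ∀ s ≤ t, loc p d (Real.sqrt n) ((Kop p m)^[s] u) ≤ η * F * θ ^ 2) (k : ℕ)
    (hk : ∀ j < k, (2 : ℝ) ^ (j + 3) ≤ Real.sqrt n) :
    ∀ s ≤ t, (t : ℝ) * (1 - 1 / 2 ^ k) ≤ s →
      loc p d (Real.sqrt n / 2 + Real.sqrt n / 2 ^ (k + 1))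
        (pos (θ * (1 - 1 / 2 ^ k)) ((Kop p m)^[s] u)) ≤ η * F * θ ^ 2 / q ^ k := by
  have hcp := hc.c_pos
  set R := Real.sqrt n with hR
  have hn0 : (0 : ℝ) < n := by exact_mod_cast hn
  have hR0 : 0 < R := Real.sqrt_pos.2 hn0
  have hRn : R ^ 2 = n := Real.sq_sqrt hn0.le
  induction k with
  | zero =>
    intro s hs _
    refine le_trans ?_ ((hM s hs).trans (by simp))
    unfold loc
    have e : R / 2 + R / 2 ^ (0 + 1) = R := by norm_num
    rw [e]
    refine Finset.sum_le_sum fun z _ => ?_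
    split_ifs
    · refine mul_le_mul_of_nonneg_right ?_ (hc.p_pos z).le
      simp only [pos]
      rw [← sq_abs ((Kop p m)^[s] u z)]
      refine pow_le_pow_left₀ (le_max_right _ _) ?_ 2
      simp only [pow_zero, div_one, sub_self, mul_zero, sub_zero]
      exact max_le (le_abs_self _) (abs_nonneg _)
    · exact le_rfl
  | succ k ih =>
    have ih' := ih fun j hj => hk j (by omega)
    have hkR := hk k (by omega)
    set P : ℝ := 2 ^ k with hP
    have hP1 : 1 ≤ P := one_le_pow₀ (by norm_num)
    have hP0 : 0 < P := by linarith
    have e1 : (2 : ℝ) ^ (k + 1) = 2 * P := by rw [pow_succ]; ring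
    have e2 : (2 : ℝ) ^ (k + 1 + 1) = 4 * P := by rw [pow_succ, pow_succ]; ring
    have e3 : (2 : ℝ) ^ (k + 3) = 8 * P := by rw [pow_succ, pow_succ, pow_succ]; ring
    have e4 : (4 : ℝ) ^ k = P ^ 2 := by rw [hP, ← pow_mul, mul_comm, pow_mul]; norm_num
    rw [e3] at hkR
    have hn64 : 64 ≤ n := by
      have : (64 : ℝ) ≤ n := by rw [← hRn]; nlinarith
      exact_mod_cast this
    have ht3 : (n : ℝ) ≤ 3 * t := by exact_mod_cast ht hn64
    have htP : 4 * P ≤ t := by nlinarith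
    intro s hs hs2
    rw [e1] at hs2
    rw [e1] at ih'
    rw [e1, e2]
    set s0 : ℕ := ⌈(t : ℝ) * (1 - 1 / P)⌉₊ with hs0
    have hinvP : 1 / P ≤ 1 := by rw [div_le_one hP0]; exact hP1
    have ha0 : 0 ≤ (t : ℝ) * (1 - 1 / P) := mul_nonneg (by positivity) (by linarith)
    have hs0le : (t : ℝ) * (1 - 1 / P) ≤ s0 := Nat.le_ceil _
    have hs0lt : (s0 : ℝ) < (t : ℝ) * (1 - 1 / P) + 1 := Nat.ceil_lt_add_one ha0
    have htdiv : 1 ≤ t / (4 * P) := by rw [le_div_iff₀ (by positivity)]; linarith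
    have hid : (t : ℝ) * (1 - 1 / (2 * P)) = t * (1 - 1 / P) + 2 * (t / (4 * P)) := by
      field_simp; ring
    have hss : s0 ≤ s := by
      have : (s0 : ℝ) ≤ s := by linarith
      exact_mod_cast this
    obtain ⟨J, rfl⟩ := Nat.exists_eq_add_of_le hss
    have hJ : t / (4 * P) ≤ (J : ℝ) := by push_cast at hs2; linarith
    set Y := η * F * θ ^ 2 / q ^ k with hY
    have hY0 : 0 < Y := by positivity
    set h := θ / (2 * P) with hh
    have hh0 : 0 < h := by positivity
    set ν := Y / h ^ 2 with hν
    have hν0 : 0 < ν := by positivity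
    have hFν : F / ν = q ^ k / (4 ^ (k + 1) * η) := by
      rw [hν, hY, hh, pow_succ (4 : ℝ) k, e4]; field_simp; norm_num
    set Λ := C / n * (F / ν) ^ α with hΛ
    have hΛ0 : 0 < Λ := by positivity
    have hst := step (R := R) (ρ := R / 2 + R / (2 * P)) (ρ' := R / 2 + R / (4 * P))
      (δ := R / (8 * P)) (θ := θ * (1 - 1 / P)) (h := h) (Y := Y) (Λ := Λ) (ν := ν)
      hc hd (by positivity)
      (by
        have : R / (2 * P) ≤ R / 2 := by
          apply div_le_div_of_nonneg_left hR0.le (by norm_num); linarith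
        linarith)
      (by
        have h1 : 1 ≤ R / (8 * P) := by rw [le_div_iff₀ (by positivity)]; linarith
        have h2 : R / (2 * P) = R / (4 * P) + 2 * (R / (8 * P)) := by field_simp; ring
        linarith)
      (mul_nonneg hθ.le (by linarith)) hh0 hY0 hΛ0
      (by rw [hν, div_mul_cancel₀ _ (by positivity)])
      (fun g hg hg2 => hFK g hg ν hν0 hg2) u s0 J
      (fun j hj => ih' (s0 + j) (by omega) (by push_cast; linarith [Nat.cast_nonneg (α := ℝ) j]))
    have eθ : θ * (1 - 1 / P) + h = θ * (1 - 1 / (2 * P)) := by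
      rw [hh]; field_simp; ring
    rw [eθ] at hst
    refine hst.trans ?_
    set A := 2 + 2 / c with hA
    have hA0 : 0 < A := by positivity
    set β := c * Λ with hβ
    have hβ0 : 0 < β := by positivity
    have hb' : q * P ^ 2 * (12 + 64 * A) ≤ n * β := by
      have := hb k
      rw [e4, ← hFν] at this
      refine this.trans (le_of_eq ?_)
      rw [hβ, hΛ]; field_simp
    have t1 : Y / (1 + J * β) ≤ Y * (12 * P ^ 2 / (n * β)) := by
      rw [div_le_iff₀ (by positivity), mul_assoc]
      refine le_mul_of_one_le_right hY0.le ?_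
      rw [div_mul_eq_mul_div, le_div_iff₀ (by positivity)]
      rw [div_le_iff₀ (by positivity)] at hJ
      have h1 : (n : ℝ) ≤ 12 * P * J := by linarith
      have h2 : 12 * P * J ≤ 12 * P ^ 2 * J := by
        have : 0 ≤ (J : ℝ) * P := by positivity
        linarith [mul_nonneg this (sub_nonneg.2 hP1)]
      have h3 : (n : ℝ) * β ≤ 12 * P ^ 2 * J * β := mul_le_mul_of_nonneg_right (h1.trans h2) hβ0.le
      have h4 : 0 ≤ 12 * P ^ 2 := by positivity
      have h5 : 12 * P ^ 2 * (1 + J * β) = 12 * P ^ 2 + 12 * P ^ 2 * J * β := by ring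
      linarith
    have t2 : A * (1 / (R / (8 * P)) ^ 2) * Y / β = Y * (64 * A * P ^ 2 / (n * β)) := by
      rw [← hRn]; field_simp; norm_num
    have t3 : η * F * θ ^ 2 / q ^ (k + 1) = Y * (1 / q) := by
      rw [hY, pow_succ q k]; field_simp
    rw [t2, t3]
    have t4 : 12 * P ^ 2 / (n * β) + 64 * A * P ^ 2 / (n * β) ≤ 1 / q := by
      rw [← add_div, div_le_div_iff₀ (by positivity) hq]
      linarith
    have := mul_le_mul_of_nonneg_left t4 hY0.le
    linarith

/-- Mean value inequality. -/
lemma mean_value (hc : Core p m c) {d : ι → ℝ} (hd : ∀ x y, m x y ≠ 0 → |d x - d y| ≤ 1)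
    {n t : ℕ} (hn : 1 ≤ n) (ht : 64 ≤ n → n ≤ 3 * t) (x0 : ι) (hx0 : d x0 = 0)
    {C F α η q θ : ℝ} (hC : 0 < C) (hF : 0 < F) (hα : 0 < α) (hη : 0 < η) (hq : 0 < q)
    (hθ : 0 < θ)
    (ha : ∀ k : ℕ, η * (64 * 4 ^ k / C) ^ (1 / α) ≤ q ^ k)
    (hb : ∀ k : ℕ, q * 4 ^ k * (12 + 64 * (2 + 2 / c)) ≤
      c * C * (q ^ k / (4 ^ (k + 1) * η)) ^ α)
    (hFK : FK p m d n C F α) (u : ι → ℝ)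
    (hM : ∀ s ≤ t, loc p d (Real.sqrt n) ((Kop p m)^[s] u) ≤ η * F * θ ^ 2) :
    (Kop p m)^[t] u x0 ≤ 2 * θ := by
  classical
  have hn0 : (0 : ℝ) < n := by exact_mod_cast hn
  have hex : ∃ k : ℕ, Real.sqrt n < 2 ^ (k + 3) := by
    obtain ⟨k, hk⟩ := pow_unbounded_of_one_lt (Real.sqrt n) (one_lt_two : (1 : ℝ) < 2)
    exact ⟨k, hk.trans_le (pow_le_pow_right₀ (by norm_num) (by omega))⟩
  set k := Nat.find hex with hkdef
  have hk1 : Real.sqrt n < 2 ^ (k + 3) := Nat.find_spec hex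
  have hk2 : ∀ j < k, (2 : ℝ) ^ (j + 3) ≤ Real.sqrt n := fun j hj =>
    not_lt.1 (Nat.find_min hex hj)
  have hit := iteration hc hd hn ht hC hF hη hq hθ hb hFK u hM k hk2 t le_rfl (by
    have : (0 : ℝ) ≤ 1 / 2 ^ k := by positivity
    nlinarith [Nat.cast_nonneg (α := ℝ) t])
  have hpx := hc.p_pos x0
  -- volume comparison
  have hvol : F ≤ p x0 * (n / C) ^ (1 / α) := by
    have h1 := hFK (fun a => if a = x0 then 1 else 0) (by
      intro a ha
      have : a = x0 := by
        by_contra hcon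
        exact ha (by simp [hcon])
      rw [this, hx0]; positivity) (p x0) hpx (by
        refine le_of_eq ?_
        simp)
    have e1 : ip p (fun a => if a = x0 then (1:ℝ) else 0) (fun a => if a = x0 then 1 else 0)
        = p x0 := by
      simp [ip]
    have e2 : dform p m (fun a => if a = x0 then (1:ℝ) else 0) = p x0 - m x0 x0 := by
      unfold dform
      rw [e1, ip_K hc.p_pos]
      simp
    rw [e1, e2] at h1
    have h2 := hc.m_nonneg x0 x0
    have h3 : C / n * (F / p x0) ^ α ≤ 1 := by
      have : C / n * (F / p x0) ^ α * p x0 ≤ 1 * p x0 := by linarith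
      exact le_of_mul_le_mul_right this hpx
    have h4 : (F / p x0) ^ α ≤ n / C := by
      rw [div_mul_eq_mul_div, div_le_one hn0] at h3
      rw [le_div_iff₀ hC]; linarith
    have h5 : F / p x0 ≤ (n / C) ^ (1 / α) := by
      calc F / p x0 = ((F / p x0) ^ α) ^ (1 / α) := by
            rw [← Real.rpow_mul (by positivity), mul_one_div_cancel hα.ne', Real.rpow_one]
        _ ≤ _ := Real.rpow_le_rpow (by positivity) h4 (by positivity)
    rw [div_le_iff₀ hpx] at h5
    linarith
  have hn4 : (n : ℝ) / C ≤ 64 * 4 ^ k / C := by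
    refine div_le_div_of_nonneg_right ?_ hC.le
    have h1 : (n : ℝ) = Real.sqrt n ^ 2 := (Real.sq_sqrt hn0.le).symm
    rw [h1]
    calc Real.sqrt n ^ 2 ≤ (2 ^ (k + 3)) ^ 2 := pow_le_pow_left₀ (Real.sqrt_nonneg _) hk1.le 2
      _ = 64 * 4 ^ k := by
        rw [pow_add, mul_pow, ← pow_mul, mul_comm k 2, pow_mul]; norm_num; ring
  have hηF : η * F ≤ q ^ k * p x0 := by
    have h1 : (n / C : ℝ) ^ (1 / α) ≤ (64 * 4 ^ k / C) ^ (1 / α) :=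
      Real.rpow_le_rpow (by positivity) hn4 (by positivity)
    calc η * F ≤ η * (p x0 * (64 * 4 ^ k / C) ^ (1 / α)) := by
          refine mul_le_mul_of_nonneg_left (hvol.trans ?_) hη.le
          exact mul_le_mul_of_nonneg_left h1 hpx.le
      _ = (η * (64 * 4 ^ k / C) ^ (1 / α)) * p x0 := by ring
      _ ≤ q ^ k * p x0 := mul_le_mul_of_nonneg_right (ha k) hpx.le
  set w := pos (θ * (1 - 1 / 2 ^ k)) ((Kop p m)^[t] u) with hw
  have h1 : w x0 ^ 2 * p x0 ≤ θ ^ 2 * p x0 := by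
    calc w x0 ^ 2 * p x0
        = if d x0 ≤ Real.sqrt n / 2 + Real.sqrt n / 2 ^ (k + 1) then w x0 ^ 2 * p x0 else 0 := by
          rw [if_pos (by rw [hx0]; positivity)]
      _ ≤ _ := Finset.single_le_sum
          (f := fun z => if d z ≤ Real.sqrt n / 2 + Real.sqrt n / 2 ^ (k + 1)
            then w z ^ 2 * p z else 0)
          (fun z _ => by
            have := (hc.p_pos z).le
            split_ifs
            · positivity
            · exact le_rfl) (Finset.mem_univ x0)
      _ ≤ η * F * θ ^ 2 / q ^ k := hit
      _ ≤ θ ^ 2 * p x0 := by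
        rw [div_le_iff₀ (by positivity)]
        nlinarith [mul_le_mul_of_nonneg_right hηF (sq_nonneg θ)]
  have h2 : w x0 ≤ θ := abs_le_of_sq_le_sq' (le_of_mul_le_mul_right h1 hpx) hθ.le |>.2
  have h3 : (Kop p m)^[t] u x0 - θ * (1 - 1 / 2 ^ k) ≤ w x0 := le_max_left _ _
  have h4 : (0 : ℝ) ≤ 1 / 2 ^ k := by positivity
  nlinarith

open Classical in
/-- Weighted L² estimate of the kernel. -/
lemma weighted (hc : Core p m c) {d : ι → ℝ} (hd : ∀ x y, m x y ≠ 0 → |d x - d y| ≤ 1)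
    {n t : ℕ} (hn : 1 ≤ n) (htn : t ≤ n) (ht : 64 ≤ n → n ≤ 3 * t) (x0 : ι) (hx0 : d x0 = 0)
    {C F α η q : ℝ} (hC : 0 < C) (hF : 0 < F) (hα : 0 < α) (hη : 0 < η) (hq : 0 < q)
    (ha : ∀ k : ℕ, η * (64 * 4 ^ k / C) ^ (1 / α) ≤ q ^ k)
    (hb : ∀ k : ℕ, q * 4 ^ k * (12 + 64 * (2 + 2 / c)) ≤
      c * C * (q ^ k / (4 ^ (k + 1) * η)) ^ α)
    (hFK : FK p m d n C F α) {κ : ℝ} (w : ι → ℝ) (hw0 : ∀ x, 0 < w x)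
    (hw : ∀ x y, m x y ≠ 0 → (w x - w y) ^ 2 ≤ κ * w y ^ 2) (hκ : 0 ≤ κ)
    (hw1 : ∀ x, d x ≤ Real.sqrt n → w x = 1) (h : ι → ℝ)
    (hh : h = (1 / p x0) • (Kop p m)^[t] (fun a => if a = x0 then 1 else 0)) :
    ip p (h / w) (h / w) ≤ 4 / (η * F) * Real.exp ((2 + 2 / c) * κ * n) := by
  have hcp := hc.c_pos
  set E := ip p (h / w) (h / w) with hE
  set f : ι → ℝ := h / w / w with hf
  have hwf : w * f = h / w := by
    funext z
    have := (hw0 z).ne'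
    simp only [hf, Pi.mul_apply, Pi.div_apply]
    field_simp
  have hE0 : 0 ≤ E := ip_self_nonneg hc.p_pos _
  rcases hE0.eq_or_lt with hz | hpos
  · rw [← hz]; positivity
  have hpx := hc.p_pos x0
  have hval : (Kop p m)^[t] f x0 = E := by
    have e1 : ip p ((Kop p m)^[t] f) (fun a => if a = x0 then 1 else 0)
        = (Kop p m)^[t] f x0 * p x0 := by
      simp [ip]
    rw [ip_K_iter hc.p_pos hc.m_symm] at e1
    have e2 : (Kop p m)^[t] (fun a => if a = x0 then (1:ℝ) else 0) = p x0 • h := by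
      rw [hh, smul_smul, mul_one_div_cancel hpx.ne', one_smul]
    rw [e2, ip_smul_right, mul_comm] at e1
    have e3 := mul_right_cancel₀ hpx.ne' e1
    rw [← e3, hE]
    unfold ip
    refine Finset.sum_congr rfl fun z _ => ?_
    simp only [hf, Pi.div_apply]
    ring
  set G := Real.exp ((2 + 2 / c) * κ * n) with hG
  have hG0 : 0 < G := Real.exp_pos _
  have hloc : ∀ s ≤ t, loc p d (Real.sqrt n) ((Kop p m)^[s] f) ≤ G * E := by
    intro s hs
    have h1 := davies hc w hw hκ f s
    rw [hwf] at h1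
    have h2 : loc p d (Real.sqrt n) ((Kop p m)^[s] f) ≤
        ip p (w * (Kop p m)^[s] f) (w * (Kop p m)^[s] f) := by
      unfold loc ip
      refine Finset.sum_le_sum fun z _ => ?_
      split_ifs with hz
      · simp only [Pi.mul_apply, hw1 z hz]
        exact le_of_eq (by ring)
      · exact mul_nonneg (mul_self_nonneg _) (hc.p_pos z).le
    refine h2.trans (h1.trans (mul_le_mul_of_nonneg_right ?_ hE0))
    have hAκ : 0 ≤ (2 + 2 / c) * κ := by positivity
    calc (1 + (2 + 2 / c) * κ) ^ s ≤ (1 + (2 + 2 / c) * κ) ^ n :=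
          pow_le_pow_right₀ (by linarith) (hs.trans htn)
      _ ≤ Real.exp ((2 + 2 / c) * κ) ^ n := by
          refine pow_le_pow_left₀ (by linarith) ?_ n
          linarith [Real.add_one_le_exp ((2 + 2 / c) * κ)]
      _ = G := by rw [← Real.exp_nat_mul, hG]; congr 1; ring
  set θ := Real.sqrt (G * E / (η * F)) with hθ
  have hθ0 : 0 < θ := Real.sqrt_pos.2 (by positivity)
  have hθ2 : θ ^ 2 = G * E / (η * F) := Real.sq_sqrt (by positivity)
  have hmv := mean_value hc hd hn ht x0 hx0 hC hF hα hη hq hθ0 ha hb hFK f (by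
    intro s hs
    refine (hloc s hs).trans (le_of_eq ?_)
    rw [hθ2]; field_simp)
  rw [hval] at hmv
  have h3 : E ^ 2 ≤ (2 * θ) ^ 2 := pow_le_pow_left₀ hE0 hmv 2
  rw [mul_pow, hθ2] at h3
  have h4 : E * E ≤ (4 / (η * F) * G) * E := by
    refine le_trans (le_of_eq (by ring)) (h3.trans (le_of_eq ?_))
    field_simp
    norm_num
  exact le_of_mul_le_mul_right h4 hpos

end HKCore

namespace HKCore

section finiteBound
variable {ι : Type*} [Fintype ι] {p : ι → ℝ} {m : ι → ι → ℝ} {c : ℝ}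

lemma cs_ip (hp : ∀ x, 0 < p x) (a b : ι → ℝ) :
    ∑ z, |a z| * |b z| * p z ≤ Real.sqrt (ip p a a * ip p b b) := by
  refine Real.le_sqrt_of_sq_le ?_
  unfold ip
  refine Finset.sum_sq_le_sum_mul_sum_of_sq_le_mul _ (fun z _ => ?_) (fun z _ => ?_) (fun z _ => ?_)
  · exact mul_nonneg (mul_self_nonneg _) (hp z).le
  · exact mul_nonneg (mul_self_nonneg _) (hp z).le
  · rw [← abs_mul_abs_self (a z), ← abs_mul_abs_self (b z)]
    exact le_of_eq (by ring)

/-- The exponential weight. -/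
noncomputable def wt (d : ι → ℝ) (R l : ℝ) : ι → ℝ := fun z => Real.exp (-(l * max (d z - R) 0))

lemma wt_lip {d : ι → ℝ} {R l : ℝ} (hl0 : 0 ≤ l) (hl1 : l ≤ 1) (x y : ι)
    (h : |d x - d y| ≤ 1) : (wt d R l x - wt d R l y) ^ 2 ≤ 4 * l ^ 2 * wt d R l y ^ 2 := by
  set s := l * max (d y - R) 0 - l * max (d x - R) 0 with hs
  have h1 : |s| ≤ l := by
    rw [hs, ← mul_sub, abs_mul, abs_of_nonneg hl0]
    have := abs_max_sub_max_le_abs (d y - R) (d x - R) 0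
    have e : d y - R - (d x - R) = d y - d x := by ring
    rw [e, abs_sub_comm (d y)] at this
    nlinarith
  have h2 := Real.abs_exp_sub_one_le (h1.trans hl1)
  have e : wt d R l x - wt d R l y = wt d R l y * (Real.exp s - 1) := by
    unfold wt
    rw [mul_sub, ← Real.exp_add, mul_one, hs]
    congr 2
    ring
  rw [e, mul_pow, mul_comm]
  refine mul_le_mul_of_nonneg_right ?_ (sq_nonneg _)
  rw [← sq_abs]
  have h3 : |Real.exp s - 1| ≤ 2 * l := by linarith
  calc |Real.exp s - 1| ^ 2 ≤ (2 * l) ^ 2 := pow_le_pow_left₀ (abs_nonneg _) h3 2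
    _ = 4 * l ^ 2 := by ring

open Classical in
lemma finite_bound (hc : Core p m c) {d d' : ι → ℝ}
    (hd : ∀ x y, m x y ≠ 0 → |d x - d y| ≤ 1) (hd' : ∀ x y, m x y ≠ 0 → |d' x - d' y| ≤ 1)
    {n : ℕ} (hn : 1 ≤ n) (x0 y0 : ι) (hx0 : d x0 = 0) (hy0 : d' y0 = 0) {D : ℝ} (hD0 : 0 ≤ D)
    (hDn : D ≤ n) (hDd : ∀ z, D ≤ d z + d' z)
    {C F F' α η q : ℝ} (hC : 0 < C) (hF : 0 < F) (hF' : 0 < F') (hα : 0 < α)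
    (hη : 0 < η) (hq : 0 < q)
    (ha : ∀ k : ℕ, η * (64 * 4 ^ k / C) ^ (1 / α) ≤ q ^ k)
    (hb : ∀ k : ℕ, q * 4 ^ k * (12 + 64 * (2 + 2 / c)) ≤
      c * C * (q ^ k / (4 ^ (k + 1) * η)) ^ α)
    (hFK : FK p m d n C F α) (hFK' : FK p m d' n C F' α) :
    (Kop p m)^[n] (fun a => if a = y0 then 1 else 0) x0 / p y0 ≤
      (4 / η * Real.exp 1) / Real.sqrt (F * F') *
        Real.exp (-D ^ 2 / (4 * (4 * (2 + 2 / c) + 1) * n)) := by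
  have hcp := hc.c_pos
  have hn0 : (0 : ℝ) < n := by exact_mod_cast hn
  set A := 2 + 2 / c with hA
  have hA0 : 0 < A := by positivity
  set B := 4 * A + 1 with hB
  have hB0 : 0 < B := by positivity
  set R := Real.sqrt n with hR
  have hR2 : R ^ 2 = n := Real.sq_sqrt hn0.le
  set l := D / (2 * B * n) with hl
  have hl0 : 0 ≤ l := by positivity
  have hl1 : l ≤ 1 := by
    rw [hl, div_le_one (by positivity)]
    nlinarith
  obtain ⟨t, t', htt, ht, ht', h64, h64'⟩ : ∃ t t' : ℕ, n = t + t' ∧ t ≤ n ∧ t' ≤ n ∧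
      (64 ≤ n → n ≤ 3 * t) ∧ (64 ≤ n → n ≤ 3 * t') :=
    ⟨n / 2, n - n / 2, by omega, by omega, by omega, by omega, by omega⟩
  have wpos : ∀ (e : ι → ℝ) z, 0 < wt e R l z := fun e z => Real.exp_pos _
  have wone : ∀ (e : ι → ℝ) z, e z ≤ R → wt e R l z = 1 := by
    intro e z hz
    unfold wt
    rw [max_eq_right (by linarith)]
    simp
  set h := (1 / p x0) • (Kop p m)^[t] (fun a => if a = x0 then 1 else 0) with hh
  set h' := (1 / p y0) • (Kop p m)^[t'] (fun a => if a = y0 then 1 else 0) with hh'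
  have E1 := weighted hc hd hn ht h64 x0 hx0 hC hF hα hη hq ha hb hFK (κ := 4 * l ^ 2)
    (wt d R l) (wpos d) (fun x y hxy => wt_lip hl0 hl1 x y (hd x y hxy)) (by positivity)
    (wone d) h hh
  have E2 := weighted hc hd' hn ht' h64' y0 hy0 hC hF' hα hη hq ha hb hFK' (κ := 4 * l ^ 2)
    (wt d' R l) (wpos d') (fun x y hxy => wt_lip hl0 hl1 x y (hd' x y hxy)) (by positivity)
    (wone d') h' hh'
  have hpx := hc.p_pos x0
  have hpy := hc.p_pos y0
  have e0 : (Kop p m)^[n] (fun a => if a = y0 then 1 else 0) x0 / p y0 = ip p h' h := by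
    have e1 : ip p ((Kop p m)^[n] (fun a => if a = y0 then 1 else 0))
        (fun a => if a = x0 then 1 else 0)
        = (Kop p m)^[n] (fun a => if a = y0 then 1 else 0) x0 * p x0 := by
      simp [ip]
    rw [htt, Function.iterate_add_apply, ip_K_iter hc.p_pos hc.m_symm,
      ← Function.iterate_add_apply, ← htt] at e1
    rw [hh, hh', ip_smul_left, ip_smul_right, e1]
    field_simp
  rw [e0]
  set G := Real.exp (A * (4 * l ^ 2) * n) with hG
  have hG0 : 0 < G := Real.exp_pos _
  have hcs := cs_ip hc.p_pos (h' / wt d' R l) (h / wt d R l)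
  have b1 : ip p h' h ≤ Real.exp (-(l * (D - 2 * R))) *
      ∑ z, |(h' / wt d' R l) z| * |(h / wt d R l) z| * p z := by
    unfold ip
    rw [Finset.mul_sum]
    refine Finset.sum_le_sum fun z _ => ?_
    have hw := wpos d z
    have hw' := wpos d' z
    have hpz := hc.p_pos z
    have q1 : h' z * h z * p z ≤ |h' z| * |h z| * p z := by
      rw [← abs_mul]
      exact mul_le_mul_of_nonneg_right (le_abs_self _) hpz.le
    have q2 : wt d' R l z * wt d R l z ≤ Real.exp (-(l * (D - 2 * R))) := by
      unfold wt
      rw [← Real.exp_add]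
      refine Real.exp_le_exp.2 ?_
      have r1 := le_max_left (d z - R) 0
      have r2 := le_max_left (d' z - R) 0
      have r3 := hDd z
      have : l * (D - 2 * R) ≤ l * (max (d' z - R) 0 + max (d z - R) 0) :=
        mul_le_mul_of_nonneg_left (by linarith) hl0
      linarith
    simp only [Pi.div_apply, abs_div, abs_of_pos hw, abs_of_pos hw']
    refine q1.trans ?_
    calc |h' z| * |h z| * p z = (wt d' R l z * wt d R l z) *
          (|h' z| / wt d' R l z * (|h z| / wt d R l z) * p z) := by field_simp
      _ ≤ _ := mul_le_mul_of_nonneg_right q2 (by positivity)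
  have b2 : Real.sqrt (ip p (h' / wt d' R l) (h' / wt d' R l) *
      ip p (h / wt d R l) (h / wt d R l)) ≤ 4 / η * G / Real.sqrt (F * F') := by
    refine Real.sqrt_le_iff.2 ⟨by positivity, ?_⟩
    have hsq : Real.sqrt (F * F') ^ 2 = F * F' := Real.sq_sqrt (by positivity)
    rw [div_pow, hsq]
    calc _ ≤ (4 / (η * F') * G) * (4 / (η * F) * G) :=
          mul_le_mul E2 E1 (ip_self_nonneg hc.p_pos _) (by positivity)
      _ = _ := by field_simp
  have b3 : Real.exp (-(l * (D - 2 * R))) * G ≤ Real.exp 1 *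
      Real.exp (-D ^ 2 / (4 * B * n)) := by
    rw [hG, ← Real.exp_add, ← Real.exp_add]
    refine Real.exp_le_exp.2 ?_
    have r1 : 2 * l * R ≤ 1 + l ^ 2 * n := by
      rw [← hR2]; nlinarith [sq_nonneg (l * R - 1)]
    have r2 : B * l ^ 2 * n - l * D = -D ^ 2 / (4 * B * n) := by
      rw [hl]; field_simp; ring
    rw [← r2, hB]
    nlinarith
  calc ip p h' h ≤ Real.exp (-(l * (D - 2 * R))) * (4 / η * G / Real.sqrt (F * F')) :=
        b1.trans (mul_le_mul_of_nonneg_left (hcs.trans b2) (Real.exp_pos _).le)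
    _ = 4 / η / Real.sqrt (F * F') * (Real.exp (-(l * (D - 2 * R))) * G) := by ring
    _ ≤ 4 / η / Real.sqrt (F * F') * (Real.exp 1 * Real.exp (-D ^ 2 / (4 * B * n))) :=
        mul_le_mul_of_nonneg_left b3 (by positivity)
    _ = _ := by ring

end finiteBound

end HKCore

namespace WeightedGraph

variable {V : Type*} (Γ : WeightedGraph V)

lemma wE_eq_zero {x y : V} (h : ¬ Γ.G.Adj x y) : Γ.wE x y = 0 :=
  le_antisymm (not_lt.1 fun h' => h ((Γ.adapted x y).1 h')) (Γ.wE_nonneg x y)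

lemma wE_self (x : V) : Γ.wE x x = 0 := Γ.wE_eq_zero (Γ.G.irrefl)

/-- The symmetric kernel. -/
noncomputable def mm (x y : V) : ℝ := mkernel Γ.wV Γ.wE x y * Γ.wV x

open Classical in
lemma mm_eq (x y : V) :
    Γ.mm x y = (if x = y then Γ.wV x - ∑' z, Γ.wE x z else 0) + Γ.wE x y := by
  unfold mm mkernel
  have hx := (Γ.wV_pos x).ne'
  by_cases h : x = y
  · subst h
    simp only [if_true, Γ.wE_self]
    field_simp
    ring
  · simp only [h, if_false]
    field_simp
    ring

lemma mkernel_dist {x y : V} (h : mkernel Γ.wV Γ.wE x y ≠ 0) : Γ.G.dist x y ≤ 1 := by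
  classical
  by_cases hxy : x = y
  · subst hxy; simp
  · unfold mkernel at h
    rw [if_neg hxy] at h
    have : Γ.G.Adj x y := by
      by_contra hcon
      exact h (by rw [Γ.wE_eq_zero hcon, zero_div])
    exact (SimpleGraph.dist_eq_one_iff_adj.2 this).le

lemma mm_dist {x y : V} (h : Γ.mm x y ≠ 0) : Γ.G.dist x y ≤ 1 :=
  Γ.mkernel_dist (left_ne_zero_of_mul h)

lemma pow_zero_of_dist (n : ℕ) (x y : V) (h : n < Γ.G.dist x y) :
    mkernelPow Γ.wV Γ.wE n x y = 0 := by
  classical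
  induction n generalizing x with
  | zero =>
    simp only [mkernelPow]
    rw [if_neg]
    rintro rfl
    simp at h
  | succ n ih =>
    simp only [mkernelPow]
    refine (tsum_congr fun z => ?_).trans tsum_zero
    by_cases hz : mkernel Γ.wV Γ.wE x z = 0
    · rw [hz, zero_mul]
    · have h1 := Γ.mkernel_dist hz
      have h2 := Γ.connected.dist_triangle (u := x) (v := z) (w := y)
      rw [ih z (by omega), mul_zero]

lemma nbr_finite {Cc : ℝ} (hctrl : Γ.Controlled Cc) (x : V) : {y | Γ.G.Adj x y}.Finite := by
  have h0 : 0 < Γ.wV x / Cc := div_pos (Γ.wV_pos x) (by linarith [hctrl.1])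
  have h1 := (Γ.wE_summable x).tendsto_cofinite_zero.eventually (gt_mem_nhds h0)
  rw [Filter.eventually_cofinite] at h1
  refine h1.subset fun y hy => ?_
  have h2 := hctrl.2 x y hy
  simp only [Set.mem_setOf_eq, not_lt]
  rw [div_le_iff₀ (by linarith [hctrl.1])]
  linarith

lemma walk_finite {Cc : ℝ} (hctrl : Γ.Controlled Cc) (n : ℕ) (x : V) :
    {y | ∃ w : Γ.G.Walk x y, w.length = n}.Finite := by
  induction n generalizing x with
  | zero =>
    refine (Set.finite_singleton x).subset ?_
    rintro y ⟨w, hw⟩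
    exact (SimpleGraph.Walk.eq_of_length_eq_zero hw).symm
  | succ n ih =>
    refine ((Γ.nbr_finite hctrl x).biUnion fun z _ => ih z).subset ?_
    rintro y ⟨w, hw⟩
    cases w with
    | nil => simp at hw
    | cons hadj w' =>
      simp only [Set.mem_iUnion]
      exact ⟨_, hadj, w', by simpa using hw⟩

lemma ball_finite {Cc : ℝ} (hctrl : Γ.Controlled Cc) (n : ℕ) (x : V) :
    {y | Γ.G.dist x y ≤ n}.Finite := by
  refine ((Set.finite_Iic n).biUnion fun k _ => Γ.walk_finite hctrl k x).subset ?_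
  intro y hy
  obtain ⟨w, hw⟩ := Γ.connected.exists_walk_length_eq_dist x y
  simp only [Set.mem_iUnion]
  exact ⟨Γ.G.dist x y, hy, w, hw⟩

open Classical in
lemma pow_eq (T : Finset V) (n : ℕ) (x : T) (y : T)
    (hT : ∀ z, Γ.G.dist (x : V) z ≤ n → z ∈ T) :
    mkernelPow Γ.wV Γ.wE n x y =
      (HKCore.Kop (fun a : T => Γ.wV a) (fun a b : T => Γ.mm a b))^[n]
        (fun a => if a = y then 1 else 0) x := by
  induction n generalizing x with
  | zero =>
    simp only [mkernelPow, Function.iterate_zero, id]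
    by_cases h : x = y
    · rw [if_pos h, if_pos (congrArg Subtype.val h)]
    · rw [if_neg h, if_neg (fun h' => h (Subtype.ext h'))]
  | succ n ih =>
    rw [Function.iterate_succ_apply']
    simp only [mkernelPow]
    rw [tsum_eq_sum (s := T)]
    · rw [← Finset.sum_coe_sort]
      conv_rhs => unfold HKCore.Kop
      rw [Finset.sum_div]
      refine Finset.sum_congr rfl fun z _ => ?_
      have hx := (Γ.wV_pos x).ne'
      by_cases hz : mkernel Γ.wV Γ.wE (x : V) z = 0
      · simp [mm, hz]
      · have h1 := Γ.mkernel_dist hz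
        rw [ih z]
        · unfold mm HKCore.Kop
          field_simp
        · intro a ha
          refine hT a ?_
          have h2 := Γ.connected.dist_triangle (u := (x : V)) (v := z) (w := a)
          omega
    · intro z hz
      have : mkernel Γ.wV Γ.wE (x : V) z = 0 := by
        by_contra hcon
        have h1 := Γ.mkernel_dist hcon
        exact hz (hT z (by omega))
      rw [this, zero_mul]

lemma core {Ce : ℝ} (hlazy : Γ.UniformlyLazy Ce) (T : Finset V) :
    HKCore.Core (fun a : T => Γ.wV a) (fun a b : T => Γ.mm a b) Ce := by
  classical
  refine ⟨hlazy.1.1, hlazy.1.2, fun x => Γ.wV_pos x, ?_, ?_, ?_, ?_⟩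
  · intro x y
    rw [mm_eq]
    have := Γ.subordinate x
    refine add_nonneg ?_ (Γ.wE_nonneg _ _)
    split_ifs
    · linarith
    · exact le_rfl
  · intro x y
    rw [mm_eq, mm_eq, Γ.wE_symm x y]
    by_cases h : (x : V) = y
    · rw [h]
    · rw [if_neg h, if_neg (Ne.symm h)]
  · intro x
    simp only [mm_eq, Finset.sum_add_distrib]
    rw [Finset.sum_coe_sort T (fun y => if (x : V) = y then Γ.wV x - ∑' z, Γ.wE x z else 0),
      Finset.sum_coe_sort T (fun y => Γ.wE x y), Finset.sum_ite_eq, if_pos x.2]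
    have := (Γ.wE_summable x).sum_le_tsum T (fun y _ => Γ.wE_nonneg x y)
    linarith
  · intro x
    rw [mm_eq, if_pos rfl, wE_self]
    linarith [hlazy.2 x]

lemma energy_eq (T : Finset V) (g : V → ℝ) (hg : ∀ x, x ∉ T → g x = 0) :
    Γ.energy g = ∑ x ∈ T, g x ^ 2 * (∑' y, Γ.wE x y)
      - ∑ x ∈ T, ∑ y ∈ T, Γ.wE x y * g y * g x := by
  have inner : ∀ x, ∑' y, (g x - g y) ^ 2 * Γ.wE x y =
      (g x ^ 2 * (∑' y, Γ.wE x y) - 2 * ∑ y ∈ T, Γ.wE x y * g y * g x)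
        + ∑ y ∈ T, g y ^ 2 * Γ.wE y x := by
    intro x
    have h1 : HasSum (fun y => g x ^ 2 * Γ.wE x y) (g x ^ 2 * ∑' y, Γ.wE x y) :=
      (Γ.wE_summable x).hasSum.mul_left _
    have h2 : HasSum (fun y => (g y ^ 2 - 2 * g x * g y) * Γ.wE x y)
        (∑ y ∈ T, (g y ^ 2 - 2 * g x * g y) * Γ.wE x y) :=
      hasSum_sum_of_ne_finset_zero fun y hy => by rw [hg y hy]; ring
    have h3 := (h1.add h2).tsum_eq
    have e : (fun y => (g x - g y) ^ 2 * Γ.wE x y) =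
        fun y => g x ^ 2 * Γ.wE x y + (g y ^ 2 - 2 * g x * g y) * Γ.wE x y := by
      funext y; ring
    rw [e, h3, Finset.mul_sum, sub_add, ← Finset.sum_sub_distrib, sub_eq_add_neg,
      ← Finset.sum_neg_distrib]
    congr 1
    refine Finset.sum_congr rfl fun y _ => ?_
    rw [Γ.wE_symm y x]; ring
  unfold energy
  simp_rw [inner]
  have h1 : HasSum (fun x => g x ^ 2 * (∑' y, Γ.wE x y) - 2 * ∑ y ∈ T, Γ.wE x y * g y * g x)
      (∑ x ∈ T, (g x ^ 2 * (∑' y, Γ.wE x y) - 2 * ∑ y ∈ T, Γ.wE x y * g y * g x)) :=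
    hasSum_sum_of_ne_finset_zero fun x hx => by rw [hg x hx]; simp
  have h2 : HasSum (fun x => ∑ y ∈ T, g y ^ 2 * Γ.wE y x)
      (∑ y ∈ T, g y ^ 2 * ∑' x, Γ.wE y x) :=
    hasSum_sum fun y _ => (Γ.wE_summable y).hasSum.mul_left _
  rw [(h1.add h2).tsum_eq, Finset.sum_sub_distrib, ← Finset.mul_sum]
  ring

lemma fk_bridge (F : V → ℝ → ℝ) (C α : ℝ)
    (hfk : Γ.IsRelFK (fun z r ν => (C / r ^ 2) * (F z r / ν) ^ α)) {Ce : ℝ}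
    (hlazy : Γ.UniformlyLazy Ce) (T : Finset V)
    (x : V) (n : ℕ) :
    HKCore.FK (fun a : T => Γ.wV a) (fun a b : T => Γ.mm a b)
      (fun a => (Γ.G.dist x a : ℝ)) n C (F x (Real.sqrt n)) α := by
  classical
  intro g hgs ν hν hgν
  set f : V → ℝ := fun z => if h : z ∈ T then g ⟨z, h⟩ else 0 with hf
  have hfg : ∀ z : T, g z = f z := by intro z; simp [hf]
  have hfT : ∀ z, z ∉ T → f z = 0 := by intro z hz; simp [hf, hz]
  set Ω := T.filter (fun z => f z ≠ 0) with hΩ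
  have hc := Γ.core hlazy T
  have e1 : HKCore.ip (fun a : T => Γ.wV a) g g = ∑ z ∈ T, f z ^ 2 * Γ.wV z := by
    unfold HKCore.ip
    rw [← Finset.sum_coe_sort T (fun z => f z ^ 2 * Γ.wV z)]
    refine Finset.sum_congr rfl fun z _ => ?_
    rw [hfg]; ring
  have e2 : HKCore.dform (fun a : T => Γ.wV a) (fun a b : T => Γ.mm a b) g = Γ.energy f := by
    unfold HKCore.dform
    rw [e1, HKCore.ip_K hc.p_pos, Γ.energy_eq T f hfT]
    have e3 : ∑ a : T, ∑ b : T, Γ.mm a b * g b * g a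
        = ∑ a ∈ T, ∑ b ∈ T, Γ.mm a b * f b * f a := by
      rw [← Finset.sum_coe_sort T (fun a => ∑ b ∈ T, Γ.mm a b * f b * f a)]
      refine Finset.sum_congr rfl fun a _ => ?_
      rw [← Finset.sum_coe_sort T (fun b => Γ.mm a b * f b * f a)]
      refine Finset.sum_congr rfl fun b _ => ?_
      rw [hfg, hfg]
    rw [e3]
    have e4 : ∀ a ∈ T, ∑ b ∈ T, Γ.mm a b * f b * f a =
        (Γ.wV a - ∑' z, Γ.wE a z) * f a ^ 2 + ∑ b ∈ T, Γ.wE a b * f b * f a := by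
      intro a ha
      simp only [mm_eq, add_mul, Finset.sum_add_distrib, ite_mul, zero_mul, Finset.sum_ite_eq, ha,
        if_true]
      ring
    rw [Finset.sum_congr rfl e4, Finset.sum_add_distrib]
    have e5 : ∑ z ∈ T, f z ^ 2 * Γ.wV z = ∑ a ∈ T, (Γ.wV a - ∑' z, Γ.wE a z) * f a ^ 2
        + ∑ a ∈ T, f a ^ 2 * ∑' z, Γ.wE a z := by
      rw [← Finset.sum_add_distrib]
      exact Finset.sum_congr rfl fun a _ => by ring
    rw [e5]; ring
  have e6 : Γ.sqnorm f = ∑ z ∈ T, f z ^ 2 * Γ.wV z :=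
    tsum_eq_sum fun z hz => by rw [hfT z hz]; ring
  have e7 : ∑ z ∈ Ω, Γ.wV z ≤ ν := by
    refine le_trans (le_of_eq ?_) hgν
    rw [hΩ, Finset.sum_filter, ← Finset.sum_coe_sort]
    exact Finset.sum_congr rfl fun z _ => by rw [hfg]
  rw [e1, e2]
  by_cases hne : Ω.Nonempty
  · have hΩpos : 0 < ∑ z ∈ Ω, Γ.wV z := Finset.sum_pos (fun z _ => Γ.wV_pos z) hne
    have h1 := hfk.1 x (Real.sqrt n) _ _ hΩpos e7
    have h2 := hfk.2 x (Real.sqrt n) Ω hne (by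
      intro z hz
      rw [hΩ, Finset.mem_filter] at hz
      exact hgs ⟨z, hz.1⟩ (by rw [hfg]; exact hz.2))
    have hSpos : 0 < Γ.sqnorm f := by
      rw [e6]
      obtain ⟨z, hz⟩ := hne
      rw [hΩ, Finset.mem_filter] at hz
      refine Finset.sum_pos' (fun a _ => mul_nonneg (sq_nonneg _) (Γ.wV_pos a).le) ⟨z, hz.1, ?_⟩
      have := Γ.wV_pos z
      have := hz.2
      positivity
    have h3 : Γ.lambda1 Ω ≤ Γ.energy f / Γ.sqnorm f := by
      refine csInf_le ⟨0, ?_⟩ ⟨f, ?_, ?_, rfl⟩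
      · rintro q ⟨k, -, -, rfl⟩
        refine div_nonneg ?_ ?_
        · unfold energy
          refine div_nonneg (tsum_nonneg fun a => tsum_nonneg fun b => ?_) (by norm_num)
          exact mul_nonneg (sq_nonneg _) (Γ.wE_nonneg _ _)
        · exact tsum_nonneg fun a => mul_nonneg (sq_nonneg _) (Γ.wV_pos a).le
      · obtain ⟨z, hz⟩ := hne
        rw [hΩ, Finset.mem_filter] at hz
        intro h0
        exact hz.2 (by rw [h0]; rfl)
      · intro z hz
        rw [hΩ, Finset.mem_filter]
        refine ⟨?_, hz⟩
        by_contra hcon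
        exact hz (hfT z hcon)
    have h4 := (h1.trans h2).trans h3
    simp only [Real.sq_sqrt (Nat.cast_nonneg (α := ℝ) n)] at h4
    rw [le_div_iff₀ hSpos, e6] at h4
    exact h4
  · have h0 : ∀ z, f z = 0 := by
      intro z
      by_contra hcon
      apply hne
      refine ⟨z, ?_⟩
      rw [hΩ, Finset.mem_filter]
      refine ⟨?_, hcon⟩
      by_contra hz
      exact hcon (hfT z hz)
    have : f = fun _ => 0 := funext h0
    rw [this]
    simp [energy]

end WeightedGraph

/-- **Theorem (Faber-Krahn implies heat kernel upper bound).**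
Let `(Γ, wV, wE)` be a weighted graph with controlled and uniformly lazy weights, and
let `F` be a positive function of `(z, r)` such that `Λ(B(z,r), ν) = (C/r²)(F(z,r)/ν)^α`
is a relative Faber-Krahn function of `Γ`.  Then there are constants `c₁, c₂ > 0`
such that for all `x, y` and all integers `n ≥ 1`,
`p(n,x,y) ≤ c₁ (F(x,√n) F(y,√n))^{-1/2} exp(-d(x,y)²/(c₂ n))`. -/
theorem faberKrahn_implies_heatKernel_upper {V : Type*} [Countable V]
    (Γ : WeightedGraph V) (Cc Ce : ℝ)
    (hctrl : Γ.Controlled Cc) (hlazy : Γ.UniformlyLazy Ce)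
    (F : V → ℝ → ℝ) (hF : ∀ z : V, ∀ r : ℝ, 0 < r → 0 < F z r)
    (C α : ℝ) (hC : 0 < C) (hα : 0 < α)
    (hfk : Γ.IsRelFK (fun z r ν => (C / r ^ 2) * (F z r / ν) ^ α)) :
    ∃ c₁ c₂ : ℝ, 0 < c₁ ∧ 0 < c₂ ∧ ∀ x y : V, ∀ n : ℕ, 1 ≤ n →
      Γ.heatKernel n x y ≤
        c₁ / Real.sqrt (F x (Real.sqrt n) * F y (Real.sqrt n)) *
          Real.exp (-(Γ.G.dist x y : ℝ) ^ 2 / (c₂ * n)) := by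
  classical
  have hCe := hlazy.1.1
  obtain ⟨η, q, hη, hq, ha, hb⟩ := HKCore.exists_const (c := Ce) (C := C) (α := α)
    (A := 2 + 2 / Ce) hCe hC hα (by positivity)
  refine ⟨4 / η * Real.exp 1, 4 * (4 * (2 + 2 / Ce) + 1), by positivity, by positivity, ?_⟩
  intro x y n hn
  have hn0 : (0 : ℝ) < n := by exact_mod_cast hn
  have hR0 : 0 < Real.sqrt n := Real.sqrt_pos.2 hn0
  by_cases hxy : Γ.G.dist x y ≤ n
  · set T : Finset V := (Γ.ball_finite hctrl n x).toFinset with hT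
    have hmem : ∀ z, z ∈ T ↔ Γ.G.dist x z ≤ n := by intro z; simp [hT]
    have hxT : x ∈ T := (hmem x).2 (by simp)
    have hyT : y ∈ T := (hmem y).2 hxy
    have hlip : ∀ (e : V) (a b : T), Γ.mm a b ≠ 0 →
        |(Γ.G.dist e a : ℝ) - (Γ.G.dist e b : ℝ)| ≤ 1 := by
      intro e a b hab
      have h1 := Γ.mm_dist hab
      have h2 := Γ.connected.dist_triangle (u := e) (v := (a : V)) (w := b)
      have h3 := Γ.connected.dist_triangle (u := e) (v := (b : V)) (w := a)
      rw [SimpleGraph.dist_comm (u := (b : V)) (v := a)] at h3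
      have h4 : (Γ.G.dist e b : ℝ) ≤ Γ.G.dist e a + 1 := by
        exact_mod_cast h2.trans (by omega)
      have h5 : (Γ.G.dist e a : ℝ) ≤ Γ.G.dist e b + 1 := by
        exact_mod_cast h3.trans (by omega)
      rw [abs_le]
      constructor <;> linarith
    have hmain := HKCore.finite_bound (Γ.core hlazy T)
      (d := fun a => (Γ.G.dist x a : ℝ)) (d' := fun a => (Γ.G.dist y a : ℝ))
      (hlip x) (hlip y) hn ⟨x, hxT⟩ ⟨y, hyT⟩ (by simp) (by simp)
      (D := (Γ.G.dist x y : ℝ)) (by positivity) (by exact_mod_cast hxy)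
      (by
        intro z
        have h2 := Γ.connected.dist_triangle (u := x) (v := (z : V)) (w := y)
        rw [SimpleGraph.dist_comm (u := (z : V)) (v := y)] at h2
        exact_mod_cast h2)
      hC (hF x _ hR0) (hF y _ hR0) hα hη hq ha hb
      (Γ.fk_bridge F C α hfk hlazy T x n) (Γ.fk_bridge F C α hfk hlazy T y n)
    have hp := Γ.pow_eq T n ⟨x, hxT⟩ ⟨y, hyT⟩ (fun z hz => (hmem z).2 hz)
    unfold WeightedGraph.heatKernel mheat
    rw [hp]
    convert hmain using 3
    funext a
    congr
  · have h0 := Γ.pow_zero_of_dist n x y (not_le.1 hxy)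
    unfold WeightedGraph.heatKernel mheat
    rw [h0, zero_div]
    positivity
end

section
/- Lemma (L² mean value inequality): Let (Γ, π, μ) be a weighted graph with controlled and uniformly lazy weights admitting a relative Faber-Krahn function of the form Λ(B(z,r), ν) = (a/r²)(F(z,r)/ν)^α for some positive function F and constants a, α > 0. Then there is a constant C such that for every z ∈ Γ, every R ≥ 1, every integer T ≥ 1, and every non-negative subsolution u of the discrete heat equation on {0, 1, …, 2T} × B(z,R): u(T,z)² ≤ C (F(z,R) · min{T^{1+1/α} R^{−2/α}, R²})^{−1} ∑_{k=0}^{2T} ∑_{x ∈ B(z,R)} u(k,x)² π(x). -/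
open scoped BigOperators

theorem mv_pointwise (c a b p q : ℝ) (hc : 0 < c) :
    -((b^2*q-a^2*p)*(q-p)) + (1-c)*((a^2+b^2)/2*(q-p)^2) ≤
      -(c/4)*(b*q-a*p)^2 + (1/c+c/4)*((b-a)^2*(p^2+q^2)) := by
  have h1 : -((b^2-a^2)*(p+q)*(q-p))/2 ≤ (c/8)*((a+b)*(q-p))^2 + (1/(2*c))*((b-a)*(p+q))^2 := by
    have : (c/8)*((a+b)*(q-p))^2 + (1/(2*c))*((b-a)*(p+q))^2 + ((b^2-a^2)*(p+q)*(q-p))/2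
        = (1/(8*c)) * (c*((a+b)*(q-p)) + 2*((b-a)*(p+q)))^2 := by
      field_simp
      ring
    have h2 : 0 ≤ (1/(8*c)) * (c*((a+b)*(q-p)) + 2*((b-a)*(p+q)))^2 := by positivity
    linarith
  have h3 : (c/8)*((a+b)*(q-p))^2 ≤ (c/4)*((a^2+b^2)*(q-p)^2) := by
    have : (c/4)*((a^2+b^2)*(q-p)^2) - (c/8)*((a+b)*(q-p))^2 = (c/8)*((a-b)*(q-p))^2 := by ring
    have : 0 ≤ (c/8)*((a-b)*(q-p))^2 := by positivity
    linarith
  have h4 : (1/(2*c))*((b-a)*(p+q))^2 ≤ (1/c)*((b-a)^2*(p^2+q^2)) := by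
    have : (1/c)*((b-a)^2*(p^2+q^2)) - (1/(2*c))*((b-a)*(p+q))^2 = (1/(2*c))*((b-a)*(p-q))^2 := by
      field_simp; ring
    have : 0 ≤ (1/(2*c))*((b-a)*(p-q))^2 := by positivity
    linarith
  have h5 : (b*q-a*p)^2 ≤ (a^2+b^2)*(q-p)^2 + (b-a)^2*(p^2+q^2) := by
    nlinarith [sq_nonneg ((a+b)/2*(q-p) - (b-a)*(p+q)/2), sq_nonneg ((a-b)*(q-p)), sq_nonneg ((b-a)*(p-q))]
  have h6 := mul_le_mul_of_nonneg_left h5 (by positivity : 0 ≤ c/4)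
  have h7 : -((b^2*q-a^2*p)*(q-p)) = -((a^2+b^2)/2*(q-p)^2) + -((b^2-a^2)*(p+q)*(q-p))/2 := by ring
  rw [h7]
  nlinarith [h6, h1, h3, h4]

theorem mv_symm_sum {V : Type*} (S : Finset V) (m : V → V → ℝ) (hm : ∀ x y, m x y = m y x)
    (h : V → V → ℝ) :
    2 * ∑ x ∈ S, ∑ y ∈ S, m x y * h x y = ∑ x ∈ S, ∑ y ∈ S, m x y * (h x y + h y x) := by
  have : ∑ x ∈ S, ∑ y ∈ S, m x y * h x y = ∑ x ∈ S, ∑ y ∈ S, m x y * h y x := by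
    rw [Finset.sum_comm]
    refine Finset.sum_congr rfl fun x _ => Finset.sum_congr rfl fun y _ => by rw [hm]
  simp_rw [mul_add, Finset.sum_add_distrib]
  rw [← this]; ring

theorem mv_cacc {V : Type*} (S : Finset V) (w : V → ℝ) (m : V → V → ℝ) (c : ℝ)
    (hw : ∀ x, 0 < w x) (hm0 : ∀ x y, 0 ≤ m x y) (hm : ∀ x y, m x y = m y x) (hc : 0 < c)
    (hlazy : ∀ x, ∑ y ∈ S, m x y ≤ (1 - c) * w x)
    (v v' η : V → ℝ) (hv' : ∀ x, 0 ≤ v' x)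
    (hsub : ∀ x ∈ S, η x ≠ 0 → w x * v' x ≤ w x * v x + ∑ y ∈ S, m x y * (v y - v x)) :
    ∑ x ∈ S, (η x)^2 * (v' x)^2 * w x + (c/4) * ∑ x ∈ S, ∑ y ∈ S, m x y * (η x * v x - η y * v y)^2
      ≤ ∑ x ∈ S, (η x)^2 * (v x)^2 * w x
        + (1/c+c/4) * ∑ x ∈ S, ∑ y ∈ S, m x y * ((η x - η y)^2 * ((v x)^2 + (v y)^2)) := by
  have key : ∀ x ∈ S, (η x)^2 * (v' x)^2 * w x ≤ (η x)^2 * (v x)^2 * w x +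
      ∑ y ∈ S, m x y * (2 * (η x)^2 * v x * (v y - v x) + (1-c) * (η x)^2 * (v y - v x)^2) := by
    intro x hx
    by_cases he : η x = 0
    · simp [he]
    set g := ∑ y ∈ S, m x y * (v y - v x) with hg
    set Q := ∑ y ∈ S, m x y * (v y - v x)^2 with hQ
    have hQ0 : 0 ≤ Q := Finset.sum_nonneg fun y _ => mul_nonneg (hm0 x y) (sq_nonneg _)
    have h1 := hsub x hx he
    have hg2 : g^2 ≤ (1-c) * w x * Q := by
      have : g^2 ≤ (∑ y ∈ S, m x y) * Q := by
        apply Finset.sum_sq_le_sum_mul_sum_of_sq_le_mul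
        · intro y _; exact hm0 x y
        · intro y _; exact mul_nonneg (hm0 x y) (sq_nonneg _)
        · intro y _; exact le_of_eq (by ring)
      exact this.trans (mul_le_mul_of_nonneg_right (hlazy x) hQ0)
    have hwx := hw x
    have h2 : (w x * v' x)^2 ≤ (w x * v x + g)^2 :=
      pow_le_pow_left₀ (mul_nonneg hwx.le (hv' x)) h1 2
    have h3 : w x * (w x * (v' x)^2) ≤ w x * (w x * (v x)^2 + 2 * v x * g + (1-c) * Q) := by
      nlinarith
    have h4 := le_of_mul_le_mul_left h3 hwx
    have h5 : ∑ y ∈ S, m x y * (2 * (η x)^2 * v x * (v y - v x) + (1-c) * (η x)^2 * (v y - v x)^2)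
        = (η x)^2 * (2 * v x * g + (1-c) * Q) := by
      rw [hg, hQ, mul_add, Finset.mul_sum, Finset.mul_sum, Finset.mul_sum, Finset.mul_sum,
        ← Finset.sum_add_distrib]
      refine Finset.sum_congr rfl fun y _ => by ring
    rw [h5]
    have := mul_le_mul_of_nonneg_left h4 (sq_nonneg (η x))
    nlinarith
  have h1 := Finset.sum_le_sum key
  rw [Finset.sum_add_distrib] at h1
  have h2 := mv_symm_sum S m hm (fun x y => 2 * (η x)^2 * v x * (v y - v x) + (1-c) * (η x)^2 * (v y - v x)^2)
  have h3 : ∑ x ∈ S, ∑ y ∈ S, m x y * ((2 * (η x)^2 * v x * (v y - v x) + (1-c) * (η x)^2 * (v y - v x)^2) + (2 * (η y)^2 * v y * (v x - v y) + (1-c) * (η y)^2 * (v x - v y)^2))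
      ≤ ∑ x ∈ S, ∑ y ∈ S, (-(c/2) * (m x y * (η x * v x - η y * v y)^2) + 2*(1/c+c/4) * (m x y * ((η x - η y)^2 * ((v x)^2 + (v y)^2)))) := by
    refine Finset.sum_le_sum fun x _ => Finset.sum_le_sum fun y _ => ?_
    have := mul_le_mul_of_nonneg_left (mv_pointwise c (η x) (η y) (v x) (v y) hc) (hm0 x y)
    linear_combination 2 * this
  simp_rw [Finset.sum_add_distrib, ← Finset.mul_sum] at h3
  linarith

/-- the gradient error term -/
theorem mv_err {V : Type*} (S A : Finset V) (hA : A ⊆ S) (w : V → ℝ) (m : V → V → ℝ)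
    (hm0 : ∀ x y, 0 ≤ m x y) (hm : ∀ x y, m x y = m y x)
    (hsub : ∀ x, ∑ y ∈ S, m x y ≤ w x) (v η : V → ℝ) (L : ℝ) (hL : 0 ≤ L)
    (hη : ∀ x ∈ S, ∀ y ∈ S, m x y ≠ 0 → η x ≠ η y → x ∈ A)
    (hη2 : ∀ x ∈ S, ∀ y ∈ S, m x y ≠ 0 → (η x - η y)^2 ≤ L) :
    ∑ x ∈ S, ∑ y ∈ S, m x y * ((η x - η y)^2 * ((v x)^2 + (v y)^2)) ≤
      2 * L * ∑ x ∈ A, (v x)^2 * w x := by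
  have h2 := mv_symm_sum S m hm (fun x y => (η x - η y)^2 * (v x)^2)
  have h3 : ∑ x ∈ S, ∑ y ∈ S, m x y * ((η x - η y)^2 * ((v x)^2 + (v y)^2)) =
      ∑ x ∈ S, ∑ y ∈ S, m x y * ((η x - η y)^2 * (v x)^2 + (η y - η x)^2 * (v y)^2) :=
    Finset.sum_congr rfl fun x _ => Finset.sum_congr rfl fun y _ => by ring
  rw [h3]
  have h4 : ∑ x ∈ S, ∑ y ∈ S, m x y * ((η x - η y)^2 * (v x)^2) ≤ L * ∑ x ∈ A, (v x)^2 * w x := by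
    rw [Finset.mul_sum]
    have : ∑ x ∈ S, ∑ y ∈ S, m x y * ((η x - η y)^2 * (v x)^2)
        = ∑ x ∈ A, ∑ y ∈ S, m x y * ((η x - η y)^2 * (v x)^2) := by
      symm
      apply Finset.sum_subset hA
      intro x hx hxA
      apply Finset.sum_eq_zero
      intro y hy
      by_cases h : m x y = 0
      · simp [h]
      · have : η x = η y := by
          by_contra hne
          exact hxA (hη x hx y hy h hne)
        simp [this]
    rw [this]
    refine Finset.sum_le_sum fun x hx => ?_
    calc ∑ y ∈ S, m x y * ((η x - η y)^2 * (v x)^2)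
        ≤ ∑ y ∈ S, m x y * (L * (v x)^2) := by
          refine Finset.sum_le_sum fun y hy => ?_
          by_cases h : m x y = 0
          · simp [h]
          · exact mul_le_mul_of_nonneg_left
              (mul_le_mul_of_nonneg_right (hη2 x (hA hx) y hy h) (sq_nonneg _)) (hm0 x y)
      _ = (∑ y ∈ S, m x y) * (L * (v x)^2) := by rw [Finset.sum_mul]
      _ ≤ w x * (L * (v x)^2) := mul_le_mul_of_nonneg_right (hsub x) (by positivity)
      _ = _ := by ring
  linarith

/-- time summation -/
theorem mv_time (T : ℕ) (s σ c D : ℝ) (hs : 0 ≤ s) (hσ : 0 < σ) (hc : 0 < c) (hD : 0 ≤ D)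
    (A E j : ℕ → ℝ) (hA0 : ∀ n, 0 ≤ A n) (hE : ∀ n, 0 ≤ E n) (hAj : ∀ n, A n ≤ j n)
    (hstep : ∀ n ≤ T, A (n+1) + c * E n ≤ A n + D * j n) :
    (∀ n ≤ T, s + σ ≤ n → A n ≤ (1/σ + D) * ∑ k ∈ (Finset.range (T+1)).filter (fun k : ℕ => s ≤ k), j k) ∧
    c * ∑ k ∈ (Finset.range (T+1)).filter (fun k : ℕ => s + σ ≤ k), E k ≤
      (1/σ + D) * ∑ k ∈ (Finset.range (T+1)).filter (fun k : ℕ => s ≤ k), j k := by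
  have hj : ∀ n, 0 ≤ j n := fun n => (hA0 n).trans (hAj n)
  set χ : ℝ → ℝ := fun t => max 0 (min 1 ((t - s)/σ)) with hχ
  have χ0 : ∀ t, 0 ≤ χ t := fun t => le_max_left _ _
  have χ1 : ∀ t, χ t ≤ 1 := fun t => max_le zero_le_one (min_le_left _ _)
  have χz : ∀ t, t ≤ s → χ t = 0 := fun t ht => by
    apply max_eq_left
    exact (min_le_right _ _).trans (div_nonpos_of_nonpos_of_nonneg (by linarith) hσ.le)
  have χo : ∀ t, s + σ ≤ t → χ t = 1 := fun t ht => by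
    have : 1 ≤ (t-s)/σ := by rw [le_div_iff₀ hσ]; linarith
    simp [hχ, min_eq_left this]
  have χd : ∀ t, χ t - χ (t-1) ≤ 1/σ := fun t => by
    have h1 : (t-s)/σ = (t-1-s)/σ + 1/σ := by rw [← add_div]; congr 1; ring
    have h2 : 0 < 1/σ := by positivity
    have : χ t ≤ χ (t-1) + 1/σ := by
      simp only [hχ]
      rw [h1]
      apply max_le
      · have := le_max_left 0 (min 1 ((t-1-s)/σ)); linarith
      · refine le_trans ?_ (add_le_add_left (le_max_right _ _) _)
        rw [min_add]
        apply min_le_min _ le_rfl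
        linarith
    linarith
  have main : ∀ N ≤ T+1, χ ((N:ℝ)-1) * A N + c * ∑ n ∈ Finset.range N, χ n * E n ≤
      (1/σ+D) * ∑ k ∈ (Finset.range N).filter (fun k : ℕ => s ≤ k), j k := by
    intro N
    induction N with
    | zero =>
      intro _
      simp only [Finset.range_zero, Finset.sum_empty, Finset.filter_empty, mul_zero, add_zero]
      rw [χz _ (by push_cast; linarith)]; simp
    | succ N ih =>
      intro hN
      have ih := ih (by omega)
      have hst := hstep N (by omega)
      rw [Finset.sum_range_succ, Finset.range_add_one, Finset.filter_insert]
      push_cast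
      rw [add_sub_cancel_right]
      have hmul := mul_le_mul_of_nonneg_left hst (χ0 N)
      have hd := χd N
      split_ifs with hsN
      · rw [Finset.sum_insert (by simp)]
        have e1 : (χ N - χ ((N:ℝ)-1)) * A N ≤ 1/σ * j N :=
          (mul_le_mul_of_nonneg_right hd (hA0 N)).trans
            (mul_le_mul_of_nonneg_left (hAj N) (by positivity))
        have e2 : χ N * (D * j N) ≤ D * j N := mul_le_of_le_one_left (mul_nonneg hD (hj N)) (χ1 N)
        nlinarith
      · push Not at hsN
        have z1 : χ N = 0 := χz _ hsN.le
        have z2 : χ ((N:ℝ)-1) = 0 := χz _ (by linarith)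
        rw [z1]; rw [z2] at ih
        linarith
  constructor
  · intro n hn hsn
    have h1 := main n (by omega)
    have h2 : (χ n - χ ((n:ℝ)-1)) * A n ≤ 1/σ * j n :=
      (mul_le_mul_of_nonneg_right (χd n) (hA0 n)).trans
            (mul_le_mul_of_nonneg_left (hAj n) (by positivity))
    have h3 : 0 ≤ c * ∑ n ∈ Finset.range n, χ n * E n :=
      mul_nonneg hc.le (Finset.sum_nonneg fun i _ => mul_nonneg (χ0 _) (hE _))
    have h4 : ∑ k ∈ (Finset.range n).filter (fun k : ℕ => s ≤ k), j k + j n ≤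
        ∑ k ∈ (Finset.range (T+1)).filter (fun k : ℕ => s ≤ k), j k := by
      have : ∑ k ∈ (Finset.range (n+1)).filter (fun k : ℕ => s ≤ k), j k =
        ∑ k ∈ (Finset.range n).filter (fun k : ℕ => s ≤ k), j k + j n := by
        rw [Finset.range_add_one, Finset.filter_insert, if_pos (by linarith),
          Finset.sum_insert (by simp)]; ring
      rw [← this]
      apply Finset.sum_le_sum_of_subset_of_nonneg
      · apply Finset.filter_subset_filter
        apply Finset.range_mono; omega
      · intros; exact hj _
    have h5 := mul_le_mul_of_nonneg_left h4 (by positivity : 0 ≤ 1/σ + D)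
    rw [χo n hsn] at h2
    have := mul_nonneg hD (hj n)
    nlinarith
  · have h1 := main (T+1) le_rfl
    have h2 : ∑ k ∈ (Finset.range (T+1)).filter (fun k : ℕ => s + σ ≤ k), E k ≤
        ∑ n ∈ Finset.range (T+1), χ n * E n := by
      rw [Finset.sum_filter]
      refine Finset.sum_le_sum fun n _ => ?_
      split_ifs with h
      · rw [χo n h]; simp
      · exact mul_nonneg (χ0 _) (hE _)
    have h3 := mul_le_mul_of_nonneg_left h2 hc.le
    have := mul_nonneg (χ0 (((T+1:ℕ):ℝ)-1)) (hA0 (T+1))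
    linarith

theorem mv_nbr_finite {V : Type*} (Γ : WeightedGraph V) (Cc : ℝ) (hctrl : Γ.Controlled Cc) (x : V) :
    {y | Γ.G.Adj x y}.Finite := by
  have hCc : 0 < Cc := by linarith [hctrl.1]
  have h1 := (Γ.wE_summable x).tendsto_cofinite_zero
  have hp : 0 < Γ.wV x / Cc := div_pos (Γ.wV_pos x) hCc
  have h2 := h1.eventually (gt_mem_nhds hp)
  rw [Filter.eventually_cofinite] at h2
  refine h2.subset fun y hy => ?_
  have := hctrl.2 x y hy
  simp only [Set.mem_ofPred_eq, not_lt]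
  rw [div_le_iff₀ hCc]; linarith

theorem mv_ball_finite {V : Type*} (Γ : WeightedGraph V) (Cc : ℝ) (hctrl : Γ.Controlled Cc) (z : V)
    (n : ℕ) : {y | Γ.G.dist z y ≤ n}.Finite := by
  induction n with
  | zero =>
    refine (Set.finite_singleton z).subset fun y hy => ?_
    simp only [Set.mem_ofPred_eq, Nat.le_zero] at hy
    simpa [eq_comm] using (Γ.connected.dist_eq_zero_iff.1 hy)
  | succ n ih =>
    refine (ih.union (ih.biUnion fun w _ => mv_nbr_finite Γ Cc hctrl w)).subset fun y hy => ?_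
    simp only [Set.mem_ofPred_eq] at hy
    by_cases h : Γ.G.dist z y ≤ n
    · exact Or.inl h
    right
    have hd : Γ.G.dist y z = n + 1 := by rw [Γ.G.dist_comm]; omega
    obtain ⟨p, hp⟩ := Γ.connected.exists_walk_length_eq_dist y z
    rw [hd] at hp
    cases p with
    | nil => simp at hp
    | @cons _ w _ hadj q =>
      simp only [SimpleGraph.Walk.length_cons, add_left_inj] at hp
      simp only [Set.mem_iUnion, Set.mem_ofPred_eq]
      refine ⟨w, ?_, hadj.symm⟩
      rw [Γ.G.dist_comm, ← hp]
      exact SimpleGraph.dist_le q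

theorem mv_dist_adj {V : Type*} (Γ : WeightedGraph V) (z x y : V) (h : Γ.G.Adj x y) :
    (Γ.G.dist z y : ℝ) ≤ Γ.G.dist z x + 1 := by
  have h1 := Γ.connected.dist_triangle (u := z) (v := x) (w := y)
  have h2 : Γ.G.dist x y = 1 := SimpleGraph.dist_eq_one_iff_adj.2 h
  rw [h2] at h1
  exact_mod_cast h1

theorem mv_adj_of_ne {V : Type*} (Γ : WeightedGraph V) (x y : V) (h : Γ.wE x y ≠ 0) :
    Γ.G.Adj x y := (Γ.adapted x y).1 (lt_of_le_of_ne (Γ.wE_nonneg x y) (Ne.symm h))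

theorem mv_energy {V : Type*} (Γ : WeightedGraph V) (S : Finset V) (f : V → ℝ)
    (hf : ∀ x, f x ≠ 0 → x ∈ S) (hf2 : ∀ x, f x ≠ 0 → ∀ y, Γ.wE x y ≠ 0 → y ∈ S) :
    Γ.energy f = (∑ x ∈ S, ∑ y ∈ S, Γ.wE x y * (f x - f y)^2) / 2 := by
  unfold WeightedGraph.energy
  congr 1
  have hz : ∀ x y, (x ∉ S ∨ y ∉ S) → (f x - f y)^2 * Γ.wE x y = 0 := by
    intro x y h
    by_cases hm : Γ.wE x y = 0
    · simp [hm]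
    have hm' : Γ.wE y x ≠ 0 := by rwa [Γ.wE_symm]
    have hx : f x = 0 := by
      by_contra hx
      rcases h with h | h
      · exact h (hf x hx)
      · exact h (hf2 x hx y hm)
    have hy : f y = 0 := by
      by_contra hy
      rcases h with h | h
      · exact h (hf2 y hy x hm')
      · exact h (hf y hy)
    simp [hx, hy]
  rw [tsum_eq_sum (s := S)]
  · refine Finset.sum_congr rfl fun x _ => ?_
    rw [tsum_eq_sum (s := S)]
    · exact Finset.sum_congr rfl fun y _ => by ring
    · intro y hy; exact hz x y (Or.inr hy)
  · intro x hx
    simp [hz x _ (Or.inl hx)]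

theorem mv_fk {V : Type*} (Γ : WeightedGraph V) (F : V → ℝ → ℝ)
    (a α : ℝ)
    (hfk : Γ.IsRelFK (fun z r ν => (a / r ^ 2) * (F z r / ν) ^ α))
    (z : V) (R : ℝ) (S Ω : Finset V) (hS : ∀ x ∈ S, (Γ.G.dist z x : ℝ) ≤ R) (hΩS : Ω ⊆ S)
    (f : V → ℝ) (hf : ∀ x, f x ≠ 0 → x ∈ Ω) (hf2 : ∀ x, f x ≠ 0 → ∀ y, Γ.wE x y ≠ 0 → y ∈ S)
    (ν : ℝ) (hν : ∑ x ∈ Ω, Γ.wV x ≤ ν) :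
    (a / R^2) * (F z R / ν) ^ α * ∑ x ∈ S, (f x)^2 * Γ.wV x ≤
      (∑ x ∈ S, ∑ y ∈ S, Γ.wE x y * (f x - f y)^2) / 2 := by
  have hfS : ∀ x, f x ≠ 0 → x ∈ S := fun x hx => hΩS (hf x hx)
  rw [← mv_energy Γ S f hfS hf2]
  have hsq : Γ.sqnorm f = ∑ x ∈ S, (f x)^2 * Γ.wV x := by
    unfold WeightedGraph.sqnorm
    rw [tsum_eq_sum (s := S)]
    intro x hx
    have : f x = 0 := by by_contra h; exact hx (hfS x h)
    simp [this]
  rw [← hsq]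
  have hEnn : ∀ g : V → ℝ, 0 ≤ Γ.energy g := fun g =>
    div_nonneg (tsum_nonneg fun x => tsum_nonneg fun y => mul_nonneg (sq_nonneg _) (Γ.wE_nonneg x y))
      (by norm_num)
  have hNnn : ∀ g : V → ℝ, 0 ≤ Γ.sqnorm g := fun g =>
    tsum_nonneg fun x => mul_nonneg (sq_nonneg _) (Γ.wV_pos x).le
  by_cases h0 : f = 0
  · have : Γ.sqnorm f = 0 := by simp [WeightedGraph.sqnorm, h0]
    rw [this, mul_zero]; exact hEnn f
  obtain ⟨x0, hx0⟩ : ∃ x, f x ≠ 0 := by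
    by_contra h; push Not at h; exact h0 (funext h)
  have hne : Ω.Nonempty := ⟨x0, hf x0 hx0⟩
  have hpos : 0 < ∑ x ∈ Ω, Γ.wV x := Finset.sum_pos (fun x _ => Γ.wV_pos x) hne
  have h1 := hfk.1 z R _ _ hpos hν
  have h2 := hfk.2 z R Ω hne (fun x hx => hS x (hΩS hx))
  have h3 : Γ.lambda1 Ω ≤ Γ.energy f / Γ.sqnorm f := by
    unfold WeightedGraph.lambda1
    apply csInf_le
    · refine ⟨0, ?_⟩
      rintro q ⟨g, _, _, rfl⟩
      exact div_nonneg (hEnn g) (hNnn g)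
    · exact ⟨f, h0, hf, rfl⟩
  have hpos2 : 0 < Γ.sqnorm f := by
    rw [hsq]
    refine Finset.sum_pos' (fun x _ => mul_nonneg (sq_nonneg _) (Γ.wV_pos x).le) ⟨x0, hfS x0 hx0, ?_⟩
    have := Γ.wV_pos x0
    positivity
  have h4 := (h1.trans h2).trans h3
  rwa [le_div_iff₀ hpos2] at h4

theorem mv_trunc {V : Type*} (Γ : WeightedGraph V) (S : Finset V) (x : V) (u u' : V → ℝ) (θ : ℝ)
    (hx : ∀ y, Γ.wE x y ≠ 0 → y ∈ S)
    (h : u' x - u x ≤ ∑' y, mkernel Γ.wV Γ.wE x y * (u y - u x)) :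
    Γ.wV x * max 0 (u' x - θ) ≤ Γ.wV x * max 0 (u x - θ) +
      ∑ y ∈ S, Γ.wE x y * (max 0 (u y - θ) - max 0 (u x - θ)) := by
  have hw := Γ.wV_pos x
  have hk : ∀ y, mkernel Γ.wV Γ.wE x y * (u y - u x) = Γ.wE x y / Γ.wV x * (u y - u x) := by
    intro y
    unfold mkernel
    split_ifs with hxy
    · subst hxy; simp
    · rfl
  simp_rw [hk] at h
  rw [tsum_eq_sum (s := S)] at h
  swap
  · intro y hy
    have : Γ.wE x y = 0 := by by_contra h; exact hy (hx y h)
    simp [this]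
  have h1 : Γ.wV x * (u' x - u x) ≤ ∑ y ∈ S, Γ.wE x y * (u y - u x) := by
    have := mul_le_mul_of_nonneg_left h hw.le
    rw [Finset.mul_sum] at this
    refine this.trans_eq (Finset.sum_congr rfl fun y _ => ?_)
    field_simp
  have hsum : ∑ y ∈ S, Γ.wE x y ≤ Γ.wV x :=
    ((Γ.wE_summable x).sum_le_tsum S (fun y _ => Γ.wE_nonneg x y)).trans (Γ.subordinate x)
  simp_rw [mul_sub (Γ.wE x _), Finset.sum_sub_distrib, ← Finset.sum_mul] at h1 ⊢
  set M := ∑ y ∈ S, Γ.wE x y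
  have hM : 0 ≤ M := Finset.sum_nonneg fun y _ => Γ.wE_nonneg x y
  have h2 : ∑ y ∈ S, Γ.wE x y * u y - M * θ ≤ ∑ y ∈ S, Γ.wE x y * max 0 (u y - θ) := by
    rw [Finset.sum_mul, ← Finset.sum_sub_distrib]
    refine Finset.sum_le_sum fun y _ => ?_
    rw [← mul_sub]
    exact mul_le_mul_of_nonneg_left (le_max_right _ _) (Γ.wE_nonneg x y)
  have h3 : 0 ≤ ∑ y ∈ S, Γ.wE x y * max 0 (u y - θ) :=
    Finset.sum_nonneg fun y _ => mul_nonneg (Γ.wE_nonneg x y) (le_max_left _ _)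
  have h4 : (Γ.wV x - M) * (u x - θ) ≤ (Γ.wV x - M) * max 0 (u x - θ) :=
    mul_le_mul_of_nonneg_left (le_max_right _ _) (by linarith)
  have h5 : 0 ≤ (Γ.wV x - M) * max 0 (u x - θ) := mul_nonneg (by linarith) (le_max_left _ _)
  rcases le_total (u' x - θ) 0 with h6 | h6
  · rw [max_eq_left h6]; linarith
  · rw [max_eq_right h6]; linarith

theorem mv_cut {V : Type*} (Γ : WeightedGraph V) (c : ℝ) (hlazy : Γ.UniformlyLazy c)
    (z : V) (R : ℝ) (S : Finset V) (hS : ∀ x, x ∈ S ↔ (Γ.G.dist z x : ℝ) ≤ R)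
    (T : ℕ) (v : ℕ → V → ℝ) (hv : ∀ n x, 0 ≤ v n x)
    (hsub : ∀ n ≤ T, ∀ x, (∀ y, Γ.wE x y ≠ 0 → y ∈ S) → x ∈ S → Γ.wV x * v (n+1) x ≤
      Γ.wV x * v n x + ∑ y ∈ S, Γ.wE x y * (v n y - v n x))
    (r δ s σ : ℝ) (hr : r ≤ R) (hδ : 1 ≤ δ) (hs : 0 ≤ s) (hσ : 0 < σ) :
    (∀ n ≤ T, s + σ ≤ n → ∑ x ∈ S.filter (fun x => (Γ.G.dist z x : ℝ) ≤ r - 2*δ), (v n x)^2 * Γ.wV x ≤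
      ((1+2*(1/c+c/4))*(4/c)) * (1/σ+1/δ^2) * ∑ k ∈ (Finset.range (T+1)).filter (fun k : ℕ => s ≤ k),
        ∑ x ∈ S.filter (fun x => (Γ.G.dist z x : ℝ) ≤ r), (v k x)^2 * Γ.wV x) ∧
    ∃ η : V → ℝ, (∀ x, η x ≠ 0 → (Γ.G.dist z x : ℝ) ≤ r - δ) ∧
      (∀ x, (Γ.G.dist z x : ℝ) ≤ r - 2*δ → η x = 1) ∧
      ∑ k ∈ (Finset.range (T+1)).filter (fun k : ℕ => s + σ ≤ k),
        ∑ x ∈ S, ∑ y ∈ S, Γ.wE x y * (η x * v k x - η y * v k y)^2 ≤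
      ((1+2*(1/c+c/4))*(4/c)) * (1/σ+1/δ^2) * ∑ k ∈ (Finset.range (T+1)).filter (fun k : ℕ => s ≤ k),
        ∑ x ∈ S.filter (fun x => (Γ.G.dist z x : ℝ) ≤ r), (v k x)^2 * Γ.wV x := by
  obtain ⟨⟨hc0, hc1⟩, hlz⟩ := hlazy
  have hδ0 : 0 < δ := by linarith
  set η : V → ℝ := fun x => max 0 (min 1 ((r - δ - Γ.G.dist z x)/δ)) with hη
  have η0 : ∀ x, 0 ≤ η x := fun x => le_max_left _ _
  have η1 : ∀ x, η x ≤ 1 := fun x => max_le zero_le_one (min_le_left _ _)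
  have ηs : ∀ x, η x ≠ 0 → (Γ.G.dist z x : ℝ) ≤ r - δ := by
    intro x hx
    by_contra h
    push Not at h
    apply hx
    apply max_eq_left
    exact (min_le_right _ _).trans (div_nonpos_of_nonpos_of_nonneg (by linarith) hδ0.le)
  have ηo : ∀ x, (Γ.G.dist z x : ℝ) ≤ r - 2*δ → η x = 1 := by
    intro x hx
    have : 1 ≤ (r - δ - Γ.G.dist z x)/δ := by rw [le_div_iff₀ hδ0]; linarith
    simp [hη, min_eq_left this]
  have ηl : ∀ x y, Γ.G.Adj x y → η x ≤ η y + 1/δ := by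
    intro x y hxy
    have h := mv_dist_adj Γ z x y hxy
    have h1 : (r - δ - Γ.G.dist z x)/δ ≤ (r - δ - Γ.G.dist z y)/δ + 1/δ := by
      rw [← add_div]; apply div_le_div_of_nonneg_right _ hδ0.le; linarith
    have h2 : 0 < 1/δ := by positivity
    have h3 := η0 y
    apply max_le
    · linarith
    · refine le_trans ?_ (add_le_add_left (le_max_right _ _) _)
      rw [min_add]
      exact min_le_min (by linarith) h1
  set C1 := (1/c+c/4) with hC1
  have hC1p : 0 < C1 := by positivity
  set B := S.filter (fun x => (Γ.G.dist z x : ℝ) ≤ r) with hB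
  have hsumle : ∀ x, ∑ y ∈ S, Γ.wE x y ≤ ∑' y, Γ.wE x y := fun x =>
    (Γ.wE_summable x).sum_le_tsum S (fun y _ => Γ.wE_nonneg x y)
  have key := mv_time T s σ (c/4) (2*C1/δ^2) hs hσ (by positivity) (by positivity)
    (fun n => ∑ x ∈ S, (η x)^2 * (v n x)^2 * Γ.wV x)
    (fun n => ∑ x ∈ S, ∑ y ∈ S, Γ.wE x y * (η x * v n x - η y * v n y)^2)
    (fun n => ∑ x ∈ B, (v n x)^2 * Γ.wV x)
    (fun n => Finset.sum_nonneg fun x _ => mul_nonneg (by positivity) (Γ.wV_pos x).le)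
    (fun n => Finset.sum_nonneg fun x _ => Finset.sum_nonneg fun y _ =>
      mul_nonneg (Γ.wE_nonneg x y) (sq_nonneg _))
    (fun n => by
      rw [hB, Finset.sum_filter]
      refine Finset.sum_le_sum fun x _ => ?_
      have hw := (Γ.wV_pos x).le
      split_ifs with h
      · have : (η x)^2 ≤ 1 := pow_le_one₀ (η0 x) (η1 x)
        exact mul_le_mul_of_nonneg_right (mul_le_of_le_one_left (sq_nonneg _) this) hw
      · have : η x = 0 := by
          by_contra hne
          have := ηs x hne
          apply h; linarith
        simp [this])
    (fun n hn => by
      have h1 := mv_cacc S Γ.wV Γ.wE c Γ.wV_pos Γ.wE_nonneg Γ.wE_symm hc0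
        (fun x => (hsumle x).trans (hlz x)) (v n) (v (n+1)) η (hv (n+1))
        (fun x hx hne => hsub n hn x (fun y hy => by
          rw [hS]
          have := mv_dist_adj Γ z x y (mv_adj_of_ne Γ x y hy)
          have := ηs x hne
          linarith) hx)
      have h2 := mv_err S B (Finset.filter_subset _ _) Γ.wV Γ.wE Γ.wE_nonneg Γ.wE_symm
        (fun x => (hsumle x).trans (Γ.subordinate x)) (v n) η (1/δ^2) (by positivity)
        (fun x hx y hy hm hne => by
          rw [hB, Finset.mem_filter]
          refine ⟨hx, ?_⟩
          by_cases h0 : η x = 0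
          · have : η y ≠ 0 := fun h => hne (by rw [h0, h])
            have := ηs y this
            have := mv_dist_adj Γ z y x (mv_adj_of_ne Γ x y hm).symm
            linarith
          · have := ηs x h0
            linarith)
        (fun x hx y hy hm => by
          have hadj := mv_adj_of_ne Γ x y hm
          have h1 := ηl x y hadj
          have h2 := ηl y x hadj.symm
          rw [← one_div_pow]
          apply sq_le_sq'
          · linarith
          · linarith)
      have h3 := mul_le_mul_of_nonneg_left h2 hC1p.le
      rw [← hC1] at h1
      have h4 : C1 * (2 * (1/δ^2) * ∑ x ∈ B, (v n x)^2 * Γ.wV x) =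
        2*C1/δ^2 * ∑ x ∈ B, (v n x)^2 * Γ.wV x := by ring
      linarith)
  obtain ⟨k1, k2⟩ := key
  set J := ∑ k ∈ (Finset.range (T+1)).filter (fun k : ℕ => s ≤ k), ∑ x ∈ B, (v k x)^2 * Γ.wV x with hJ
  have hJ0 : 0 ≤ J := Finset.sum_nonneg fun k _ => Finset.sum_nonneg fun x _ =>
    mul_nonneg (sq_nonneg _) (Γ.wV_pos x).le
  have hDD : (1/σ + 2*C1/δ^2) ≤ (1+2*C1) * (1/σ+1/δ^2) := by
    have h1 : 0 ≤ 2*C1*(1/σ) := by positivity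
    have h2 : 0 ≤ 1/δ^2 := by positivity
    have h3 : 2*C1/δ^2 = 2*C1*(1/δ^2) := by ring
    rw [h3]; nlinarith
  have hDJ := mul_le_mul_of_nonneg_right hDD hJ0
  have h4c : 1 ≤ 4/c := by rw [le_div_iff₀ hc0]; linarith
  have hX : 0 ≤ (1+2*C1) * (1/σ+1/δ^2) * J := by positivity
  refine ⟨?_, η, ηs, ηo, ?_⟩
  · intro n hn hsn
    have h1 := k1 n hn hsn
    have h2 : ∑ x ∈ S.filter (fun x => (Γ.G.dist z x : ℝ) ≤ r - 2*δ), (v n x)^2 * Γ.wV x ≤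
        ∑ x ∈ S, (η x)^2 * (v n x)^2 * Γ.wV x := by
      rw [Finset.sum_filter]
      refine Finset.sum_le_sum fun x _ => ?_
      have hw := (Γ.wV_pos x).le
      split_ifs with h
      · rw [ηo x h]; simp
      · positivity
    have h3 : (1+2*C1) * (1/σ+1/δ^2) * J ≤ (4/c) * ((1+2*C1) * (1/σ+1/δ^2) * J) :=
      le_mul_of_one_le_left hX h4c
    calc _ ≤ _ := h2
      _ ≤ _ := h1
      _ ≤ _ := hDJ
      _ ≤ _ := h3
      _ = _ := by ring
  · have h1 := mul_le_mul_of_nonneg_left (k2.trans hDJ) (by positivity : 0 ≤ 4/c)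
    rw [← mul_assoc, show 4/c*(c/4) = 1 by field_simp, one_mul] at h1
    refine h1.trans_eq (by ring)

noncomputable def mvJ {V : Type*} (Γ : WeightedGraph V) (z : V) (S : Finset V) (T : ℕ)
    (u : ℕ → V → ℝ) (r s θ : ℝ) : ℝ :=
  ∑ k ∈ (Finset.range (T+1)).filter (fun k : ℕ => s ≤ k),
    ∑ x ∈ S.filter (fun x => (Γ.G.dist z x : ℝ) ≤ r), (max 0 (u k x - θ))^2 * Γ.wV x

theorem mvJ_nonneg {V : Type*} (Γ : WeightedGraph V) (z : V) (S : Finset V) (T : ℕ)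
    (u : ℕ → V → ℝ) (r s θ : ℝ) : 0 ≤ mvJ Γ z S T u r s θ :=
  Finset.sum_nonneg fun _ _ => Finset.sum_nonneg fun x _ =>
    mul_nonneg (sq_nonneg _) (Γ.wV_pos x).le

theorem mvJ_mono {V : Type*} (Γ : WeightedGraph V) (z : V) (S : Finset V) (T : ℕ)
    (u : ℕ → V → ℝ) (r s θ r' s' θ' : ℝ) (hr : r' ≤ r) (hs : s ≤ s') (hθ : θ ≤ θ') :
    mvJ Γ z S T u r' s' θ' ≤ mvJ Γ z S T u r s θ := by
  unfold mvJ
  have h1 : ∀ k, ∑ x ∈ S.filter (fun x => (Γ.G.dist z x : ℝ) ≤ r'), (max 0 (u k x - θ'))^2 * Γ.wV x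
      ≤ ∑ x ∈ S.filter (fun x => (Γ.G.dist z x : ℝ) ≤ r), (max 0 (u k x - θ))^2 * Γ.wV x := by
    intro k
    calc _ ≤ ∑ x ∈ S.filter (fun x => (Γ.G.dist z x : ℝ) ≤ r'), (max 0 (u k x - θ))^2 * Γ.wV x := by
          refine Finset.sum_le_sum fun x _ => mul_le_mul_of_nonneg_right ?_ (Γ.wV_pos x).le
          exact pow_le_pow_left₀ (le_max_left _ _) (max_le_max le_rfl (by linarith)) 2
      _ ≤ _ := by
          apply Finset.sum_le_sum_of_subset_of_nonneg
          · intro x hx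
            rw [Finset.mem_filter] at hx ⊢
            exact ⟨hx.1, hx.2.trans hr⟩
          · intro x _ _; exact mul_nonneg (sq_nonneg _) (Γ.wV_pos x).le
  refine (Finset.sum_le_sum fun k _ => h1 k).trans ?_
  apply Finset.sum_le_sum_of_subset_of_nonneg
  · intro x hx
    rw [Finset.mem_filter] at hx ⊢
    exact ⟨hx.1, hs.trans hx.2⟩
  · intro x _ _
    exact Finset.sum_nonneg fun x _ => mul_nonneg (sq_nonneg _) (Γ.wV_pos x).le

theorem mv_step {V : Type*} (Γ : WeightedGraph V) (c : ℝ) (hlazy : Γ.UniformlyLazy c)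
    (F : V → ℝ → ℝ) (a α : ℝ) (ha : 0 < a) (hα : 0 < α)
    (hfk : Γ.IsRelFK (fun z r ν => (a / r ^ 2) * (F z r / ν) ^ α))
    (z : V) (R : ℝ) (hR : 1 ≤ R) (hF : 0 < F z R)
    (S : Finset V) (hS : ∀ x, x ∈ S ↔ (Γ.G.dist z x : ℝ) ≤ R)
    (T : ℕ) (u : ℕ → V → ℝ)
    (hsub : ∀ n ≤ T, ∀ x ∈ S,
          u (n + 1) x - u n x ≤ ∑' y, mkernel Γ.wV Γ.wE x y * (u n y - u n x))
    (r δ s σ θ θ' : ℝ) (hr : r ≤ R) (hδ : 1 ≤ δ) (hs : 0 ≤ s) (hσ : 0 < σ) (hθ : θ < θ')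
    (G : ℝ) (hG : ((1+2*(1/c+c/4))*(4/c)) * (1/σ+1/δ^2) * mvJ Γ z S T u r s θ ≤ G) :
    mvJ Γ z S T u (r-2*δ-2*δ) (s+σ+σ) θ' ≤ (R^2/a) * (G/((θ'-θ)^2 * F z R))^α * G := by
  have hc0 := hlazy.1.1
  have hδ0 : 0 < δ := by linarith
  have hd : 0 < θ' - θ := by linarith
  set C1 := (1+2*(1/c+c/4))*(4/c) with hC1
  have hC1p : 0 < C1 := by positivity
  have hDp : 0 < 1/σ+1/δ^2 := by positivity
  set J := mvJ Γ z S T u r s θ with hJ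
  have hJ0 : 0 ≤ J := mvJ_nonneg _ _ _ _ _ _ _ _
  have hmono : mvJ Γ z S T u (r-2*δ-2*δ) (s+σ+σ) θ' ≤ J :=
    mvJ_mono _ _ _ _ _ _ _ _ _ _ _ (by linarith) (by linarith) hθ.le
  have hmono2 : mvJ Γ z S T u (r-2*δ) (s+σ) θ' ≤ J :=
    mvJ_mono _ _ _ _ _ _ _ _ _ _ _ (by linarith) (by linarith) hθ.le
  have hG0 : 0 ≤ G := le_trans (by positivity) hG
  rcases hJ0.eq_or_lt with hJz | hJpos
  · rw [← hJz] at hmono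
    exact hmono.trans (by positivity)
  have hGpos : 0 < G := lt_of_lt_of_le (by positivity) hG
  have hsubv : ∀ t : ℝ, ∀ n ≤ T, ∀ x, (∀ y, Γ.wE x y ≠ 0 → y ∈ S) → x ∈ S →
      Γ.wV x * max 0 (u (n+1) x - t) ≤
      Γ.wV x * max 0 (u n x - t) + ∑ y ∈ S, Γ.wE x y * (max 0 (u n y - t) - max 0 (u n x - t)) :=
    fun t n hn x hx hxS => mv_trunc Γ S x (u n) (u (n+1)) t hx (hsub n hn x hxS)
  have h1 := (mv_cut Γ c hlazy z R S hS T (fun n x => max 0 (u n x - θ))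
    (fun n x => le_max_left _ _) (hsubv θ) r δ s σ hr hδ hs hσ).1
  obtain ⟨η, ηs, ηo, h2⟩ := (mv_cut Γ c hlazy z R S hS T (fun n x => max 0 (u n x - θ'))
    (fun n x => le_max_left _ _) (hsubv θ') (r-2*δ) δ (s+σ) σ (by linarith) hδ (by linarith) hσ).2
  have h2' := h2.trans (mul_le_mul_of_nonneg_left hmono2 (by positivity))
  have h2'' := h2'.trans hG
  set ν := G / (θ'-θ)^2 with hν
  have hνpos : 0 < ν := by positivity
  have h3 : ∀ k ∈ (Finset.range (T+1)).filter (fun k : ℕ => s + σ + σ ≤ k),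
      (a/R^2) * (F z R/ν)^α * ∑ x ∈ S.filter (fun x => (Γ.G.dist z x : ℝ) ≤ r-2*δ-2*δ),
        (max 0 (u k x - θ'))^2 * Γ.wV x ≤
      ∑ x ∈ S, ∑ y ∈ S, Γ.wE x y * (η x * max 0 (u k x - θ') - η y * max 0 (u k y - θ'))^2 := by
    intro k hk
    rw [Finset.mem_filter, Finset.mem_range] at hk
    have hΩ : ∑ x ∈ (S.filter (fun x => (Γ.G.dist z x : ℝ) ≤ r - 2*δ)).filter (fun x => θ' < u k x),
        Γ.wV x ≤ ν := by
      rw [hν, le_div_iff₀ (by positivity), Finset.sum_mul]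
      refine le_trans ?_ ((h1 k (by omega) (by linarith [hk.2])).trans hG)
      rw [Finset.sum_filter]
      refine Finset.sum_le_sum fun x _ => ?_
      have hw := (Γ.wV_pos x).le
      split_ifs with h
      · rw [mul_comm]
        apply mul_le_mul_of_nonneg_right _ hw
        exact pow_le_pow_left₀ hd.le (le_trans (by linarith) (le_max_right _ _)) 2
      · positivity
    have h4 := mv_fk Γ F a α hfk z R S _ (fun x hx => (hS x).1 hx)
      ((Finset.filter_subset _ _).trans (Finset.filter_subset _ _))
      (fun x => η x * max 0 (u k x - θ'))
      (fun x hx => by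
        have he : η x ≠ 0 := left_ne_zero_of_mul hx
        have hm := right_ne_zero_of_mul hx
        have := ηs x he
        rw [Finset.mem_filter, Finset.mem_filter, hS]
        refine ⟨⟨by linarith, by linarith⟩, ?_⟩
        by_contra hcon
        exact hm (max_eq_left (by linarith)))
      (fun x hx y hy => by
        have he : η x ≠ 0 := left_ne_zero_of_mul hx
        have := ηs x he
        have := mv_dist_adj Γ z x y (mv_adj_of_ne Γ x y hy)
        rw [hS]; linarith) ν hΩ
    have h5 : ∑ x ∈ S.filter (fun x => (Γ.G.dist z x : ℝ) ≤ r-2*δ-2*δ), (max 0 (u k x - θ'))^2 * Γ.wV x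
        ≤ ∑ x ∈ S, (η x * max 0 (u k x - θ'))^2 * Γ.wV x := by
      rw [Finset.sum_filter]
      refine Finset.sum_le_sum fun x _ => ?_
      have hw := (Γ.wV_pos x).le
      split_ifs with h
      · rw [ηo x h, one_mul]
      · positivity
    have h6 : 0 ≤ ∑ x ∈ S, ∑ y ∈ S, Γ.wE x y * (η x * max 0 (u k x - θ') - η y * max 0 (u k y - θ'))^2 :=
      Finset.sum_nonneg fun x _ => Finset.sum_nonneg fun y _ =>
        mul_nonneg (Γ.wE_nonneg x y) (sq_nonneg _)
    have h7 := mul_le_mul_of_nonneg_left h5 (by positivity : 0 ≤ (a/R^2) * (F z R/ν)^α)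
    linarith
  have h8 := (Finset.sum_le_sum h3).trans h2''
  rw [← Finset.mul_sum] at h8
  change (a/R^2) * (F z R/ν)^α * mvJ Γ z S T u (r-2*δ-2*δ) (s+σ+σ) θ' ≤ G at h8
  have hinv : (F z R/ν) = (G/((θ'-θ)^2 * F z R))⁻¹ := by
    rw [hν]; field_simp
  rw [hinv, Real.inv_rpow (by positivity)] at h8
  set X := (G/((θ'-θ)^2 * F z R))^α with hX
  have hXp : 0 < X := by positivity
  have hRp : 0 < R := by linarith
  have h9 : (a/R^2 * X⁻¹) * (R^2/a * X * G) = G := by field_simp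
  have h10 : 0 < a/R^2 * X⁻¹ := by positivity
  exact le_of_mul_le_mul_left (h8.trans_eq h9.symm) h10

theorem mv_iter (K : ℕ) (J : ℕ → ℝ) (A B q α : ℝ) (hJ : ∀ k, 0 ≤ J k) (hA : 0 ≤ A) (hB : 0 ≤ B)
    (hq : 0 < q) (hα : 0 < α) (hq1 : (16*q)^α * 4 = 1)
    (hrec : ∀ k < K, J (k+1) ≤ A * (B * 16^k * J k)^α * 4^k * J k)
    (h0 : A * (B * J 0)^α ≤ q) : ∀ k ≤ K, J k ≤ q^k * J 0 := by
  intro k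
  induction k with
  | zero => intro _; simp
  | succ k ih =>
    intro hk
    have ih := ih (by omega)
    have h1 := hrec k (by omega)
    have h2 : (B * 16^k * J k)^α ≤ (B * J 0)^α * ((16*q)^α)^k := by
      rw [← Real.rpow_natCast ((16*q)^α), ← Real.rpow_mul (by positivity), mul_comm α,
        Real.rpow_mul (by positivity), Real.rpow_natCast, ← Real.mul_rpow (mul_nonneg hB (hJ 0)) (by positivity)]
      apply Real.rpow_le_rpow (mul_nonneg (by positivity) (hJ k)) _ hα.le
      calc B * 16^k * J k ≤ B * 16^k * (q^k * J 0) := mul_le_mul_of_nonneg_left ih (by positivity)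
        _ = _ := by rw [mul_pow]; ring
    have h3 : A * (B * 16^k * J k)^α * 4^k ≤ q := by
      calc A * (B * 16^k * J k)^α * 4^k ≤ A * ((B * J 0)^α * ((16*q)^α)^k) * 4^k := by gcongr
        _ = A * (B * J 0)^α * ((16*q)^α * 4)^k := by rw [mul_pow]; ring
        _ ≤ q := by rw [hq1]; simpa using h0
    calc J (k+1) ≤ _ := h1
      _ ≤ q * J k := mul_le_mul_of_nonneg_right h3 (hJ k)
      _ ≤ q * (q^k * J 0) := mul_le_mul_of_nonneg_left ih hq.le
      _ = _ := by ring

theorem mv_point {V : Type*} (Γ : WeightedGraph V)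
    (F : V → ℝ → ℝ) (a α : ℝ) (ha : 0 < a) (hα : 0 < α)
    (hfk : Γ.IsRelFK (fun z r ν => (a / r ^ 2) * (F z r / ν) ^ α))
    (z : V) (R : ℝ) (hR : 1 ≤ R) (hF : 0 < F z R)
    (S : Finset V) (hS : ∀ x, x ∈ S ↔ (Γ.G.dist z x : ℝ) ≤ R) :
    F z R / Γ.wV z ≤ (R^2/a)^(1/α) := by
  classical
  set f : V → ℝ := fun x => if x = z then 1 else 0 with hf
  have hzS : z ∈ S := by rw [hS]; simp; linarith
  have hfz : ∀ x, f x ≠ 0 → x = z := by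
    intro x hx; by_contra h; exact hx (if_neg h)
  have hf0 : ∀ x, 0 ≤ f x := fun x => by simp only [hf]; split_ifs <;> norm_num
  have h1 := mv_fk Γ F a α hfk z R S {z} (fun x hx => (hS x).1 hx) (by simpa using hzS) f
    (fun x hx => by simpa using hfz x hx)
    (fun x hx y hy => by
      rw [hfz x hx] at hy
      have := mv_dist_adj Γ z z y (mv_adj_of_ne Γ z y hy)
      rw [hS]
      rw [SimpleGraph.dist_self, Nat.cast_zero] at this
      linarith) (Γ.wV z) (by simp)
  have hn : ∑ x ∈ S, (f x)^2 * Γ.wV x = Γ.wV z := by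
    rw [Finset.sum_eq_single z]
    · simp [hf]
    · intro x _ hx; simp [hf, hx]
    · intro h; exact absurd hzS h
  have h2 : ∑ x ∈ S, ∑ y ∈ S, Γ.wE x y * (f x - f y)^2 ≤ 2 * Γ.wV z := by
    rw [← hn]
    have h3 := mv_symm_sum S Γ.wE Γ.wE_symm (fun x _ => (f x)^2)
    calc _ ≤ ∑ x ∈ S, ∑ y ∈ S, Γ.wE x y * ((f x)^2 + (f y)^2) := by
          refine Finset.sum_le_sum fun x _ => Finset.sum_le_sum fun y _ => ?_
          apply mul_le_mul_of_nonneg_left _ (Γ.wE_nonneg x y)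
          nlinarith [mul_nonneg (hf0 x) (hf0 y)]
      _ = _ := h3.symm
      _ ≤ _ := by
          refine mul_le_mul_of_nonneg_left (Finset.sum_le_sum fun x _ => ?_) (by norm_num)
          rw [← Finset.sum_mul, mul_comm]
          exact mul_le_mul_of_nonneg_left
            (((Γ.wE_summable x).sum_le_tsum S (fun y _ => Γ.wE_nonneg x y)).trans (Γ.subordinate x))
            (sq_nonneg _)
  rw [hn] at h1
  have hw := Γ.wV_pos z
  have h4 : (a/R^2) * (F z R / Γ.wV z)^α ≤ 1 := by
    have : (a/R^2) * (F z R / Γ.wV z)^α * Γ.wV z ≤ 1 * Γ.wV z := by linarith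
    exact le_of_mul_le_mul_right this hw
  have hRp : 0 < R := by linarith
  have h5 : (F z R / Γ.wV z)^α ≤ R^2/a := by
    rw [le_div_iff₀ ha]
    rw [div_mul_eq_mul_div, div_le_one (by positivity)] at h4
    linarith
  have h6 := Real.rpow_le_rpow (by positivity) h5 (by positivity : 0 ≤ 1/α)
  rwa [← Real.rpow_mul (by positivity), mul_one_div_cancel hα.ne', Real.rpow_one] at h6

theorem mv_final_num (T R α : ℝ) (hT : 0 < T) (hR : 0 < R) (hα : 0 < α) :
    (1/T + 1/R^2)^(1+1/α) * R^(2/α) * min (T^(1+1/α) * R^(-(2/α))) (R^2) ≤ 2^(1+1/α) := by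
  have hp : 0 < 1 + 1/α := by positivity
  have hRR : R^(2/α) * R^(-(2/α)) = 1 := by
    rw [← Real.rpow_add hR]; simp
  rcases le_total T (R^2) with h | h
  · have h1 : 1/T + 1/R^2 ≤ 2/T := by
      have := one_div_le_one_div_of_le hT h
      have h2 : 2/T = 1/T+1/T := by ring
      linarith
    have h2 := Real.rpow_le_rpow (by positivity) h1 hp.le
    calc _ ≤ (2/T)^(1+1/α) * R^(2/α) * (T^(1+1/α) * R^(-(2/α))) := by
          gcongr
          exact min_le_left _ _
      _ = ((2/T)^(1+1/α) * T^(1+1/α)) * (R^(2/α) * R^(-(2/α))) := by ring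
      _ = 2^(1+1/α) := by
          rw [hRR, ← Real.mul_rpow (by positivity) hT.le, div_mul_cancel₀ _ hT.ne', mul_one]
  · have hR2 : 0 < R^2 := by positivity
    have h1 : 1/T + 1/R^2 ≤ 2/R^2 := by
      have := one_div_le_one_div_of_le hR2 h
      have h2 : 2/R^2 = 1/R^2+1/R^2 := by ring
      linarith
    have h2 := Real.rpow_le_rpow (by positivity) h1 hp.le
    have h3 : R^(2/α) * R^2 = (R^2)^(1+1/α) := by
      rw [← Real.rpow_natCast R 2, ← Real.rpow_mul hR.le, ← Real.rpow_add hR]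
      congr 1; push_cast; ring
    calc _ ≤ (2/R^2)^(1+1/α) * R^(2/α) * (R^2) := by
          gcongr
          exact min_le_right _ _
      _ = (2/R^2)^(1+1/α) * (R^2)^(1+1/α) := by rw [mul_assoc, h3]
      _ = 2^(1+1/α) := by
          rw [← Real.mul_rpow (by positivity) hR2.le, div_mul_cancel₀ _ hR2.ne']

theorem mv_scale (T R e : ℝ) (hT : 0 < T) (hR : 0 < R) (e0 : 0 < e) (e1 : e ≤ 1) :
    1/(T/8*e) + 1/(R/16*e)^2 ≤ 256 * (1/e^2) * (1/T + 1/R^2) := by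
  have i1 : 1/(T/8*e) = 8 * (1/T * (1/e)) := by field_simp
  have i2 : 1/(R/16*e)^2 = 256 * (1/R^2 * (1/e^2)) := by field_simp; norm_num
  have i3 : 1/e ≤ 1/e^2 := by
    apply one_div_le_one_div_of_le (by positivity); nlinarith
  have i4 : 0 < 1/T := by positivity
  have i5 : 0 < 1/e^2 := by positivity
  have i6 := mul_le_mul_of_nonneg_left i3 i4.le
  have i7 := mul_pos i4 i5
  rw [i1, i2]; linarith

set_option maxHeartbeats 1600000 in
theorem mv_core {V : Type*} (Γ : WeightedGraph V) (c : ℝ) (hlazy : Γ.UniformlyLazy c)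
    (F : V → ℝ → ℝ) (a α : ℝ) (ha : 0 < a) (hα : 0 < α)
    (hfk : Γ.IsRelFK (fun z r ν => (a / r ^ 2) * (F z r / ν) ^ α))
    (C2 q M : ℝ) (hC2 : C2 = 256 * ((1+2*(1/c+c/4))*(4/c))) (hq : q = 4^(-(1/α))/16)
    (hM : M = 4*C2*(C2/(a*q))^(1/α))
    (z : V) (R : ℝ) (hR : 1 ≤ R) (hF : 0 < F z R)
    (S : Finset V) (hS : ∀ x, x ∈ S ↔ (Γ.G.dist z x : ℝ) ≤ R)
    (T : ℕ) (hT : 1 ≤ T) (u : ℕ → V → ℝ) (hu : ∀ n x, 0 ≤ u n x)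
    (hsub : ∀ n ≤ T, ∀ x ∈ S,
          u (n + 1) x - u n x ≤ ∑' y, mkernel Γ.wV Γ.wE x y * (u n y - u n x)) :
    u T z ^ 2 ≤ (2*M + 2*(256^(1+1/α) * (1/a)^(1/α))) *
      ((1/(T:ℝ) + 1/R^2)^(1+1/α) * R^(2/α)) * mvJ Γ z S T u R 0 0 / F z R := by
  have hc0 := hlazy.1.1
  have hRp : 0 < R := by linarith
  have hTp : (0:ℝ) < T := by exact_mod_cast hT
  have hC2p : 0 < C2 := by rw [hC2]; positivity
  have hqp : 0 < q := by rw [hq]; positivity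
  have hMp : 0 < M := by rw [hM]; positivity
  have hzS : z ∈ S := by rw [hS]; simp; linarith
  set D := 1/(T:ℝ) + 1/R^2 with hD
  have hDp : 0 < D := by positivity
  set P := D^(1+1/α) * R^(2/α) with hP
  have hPp : 0 < P := by positivity
  set J0 := mvJ Γ z S T u R 0 0 with hJ0
  have hJ0n : 0 ≤ J0 := mvJ_nonneg _ _ _ _ _ _ _ _
  -- point evaluation
  have hpt : ∀ r s θ : ℝ, 0 ≤ r → s ≤ T →
      (max 0 (u T z - θ))^2 * Γ.wV z ≤ mvJ Γ z S T u r s θ := by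
    intro r s θ hr hs
    unfold mvJ
    calc (max 0 (u T z - θ))^2 * Γ.wV z
        ≤ ∑ x ∈ S.filter (fun x => (Γ.G.dist z x : ℝ) ≤ r), (max 0 (u T x - θ))^2 * Γ.wV x := by
          apply Finset.single_le_sum (f := fun x => (max 0 (u T x - θ))^2 * Γ.wV x)
          · intro x _; exact mul_nonneg (sq_nonneg _) (Γ.wV_pos x).le
          · rw [Finset.mem_filter]; exact ⟨hzS, by simpa using hr⟩
      _ ≤ _ := by
          apply Finset.single_le_sum (f := fun k => ∑ x ∈ S.filter (fun x => (Γ.G.dist z x : ℝ) ≤ r), (max 0 (u k x - θ))^2 * Γ.wV x)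
          · intro k _
            exact Finset.sum_nonneg fun x _ => mul_nonneg (sq_nonneg _) (Γ.wV_pos x).le
          · rw [Finset.mem_filter, Finset.mem_range]; exact ⟨by omega, hs⟩
  have hwz := Γ.wV_pos z
  rcases hJ0n.eq_or_lt with hz | hJpos
  · have h1 := hpt R 0 0 hRp.le hTp.le
    rw [← hJ0, ← hz, sub_zero, max_eq_right (hu T z)] at h1
    have h2 : u T z ^ 2 ≤ 0 := by
      by_contra h; push Not at h
      have := mul_pos h hwz; linarith
    rw [← hz]; simpa using h2
  set θ := Real.sqrt (M * P * J0 / F z R) with hθ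
  have hθsq : θ^2 = M * P * J0 / F z R := Real.sq_sqrt (by positivity)
  have hθp : 0 < θ := Real.sqrt_pos.2 (by positivity)
  -- choose K
  obtain ⟨K, hK, hKmin⟩ : ∃ K : ℕ, R < 16 * 2^K ∧ ∀ k < K, 16 * 2^k ≤ R := by
    have hex : ∃ K : ℕ, R < 16 * 2^K := by
      obtain ⟨n, hn⟩ := pow_unbounded_of_one_lt R (one_lt_two : (1:ℝ) < 2)
      exact ⟨n, by have : (0:ℝ) < 2^n := by positivity
                   linarith⟩
    classical
    refine ⟨Nat.find hex, Nat.find_spec hex, fun k hk => ?_⟩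
    exact not_lt.1 (Nat.find_min hex hk)
  set J : ℕ → ℝ := fun k => mvJ Γ z S T u (R/2*(1+(1/2)^k)) (T/2*(1-(1/2)^k)) (θ*(1-(1/2)^k)) with hJ
  have hJz : J 0 = J0 := by
    simp [hJ, hJ0, show R/2*(1+1) = R by ring]
  have hhalf : ∀ k : ℕ, 0 < (1/2:ℝ)^k ∧ (1/2:ℝ)^k ≤ 1 := fun k =>
    ⟨by positivity, pow_le_one₀ (by norm_num) (by norm_num)⟩
  have hpow2 : ∀ k : ℕ, (1/2:ℝ)^k * 2^k = 1 := fun k => by rw [← mul_pow]; norm_num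
  have hrec : ∀ k < K, J (k+1) ≤ (R^2/a*C2*D) * ((4*C2*D/(θ^2*F z R)) * 16^k * J k)^α * 4^k * J k := by
    intro k hk
    obtain ⟨e0, e1⟩ := hhalf k
    have hJk : 0 ≤ J k := mvJ_nonneg _ _ _ _ _ _ _ _
    set e := (1/2:ℝ)^k with he
    have he2 : (1/2:ℝ)^(k+1) = e/2 := by rw [pow_succ]; ring
    have h2k : (2:ℝ)^k = 1/e := by
      have := hpow2 k; field_simp; linarith
    have h4k : (4:ℝ)^k = 1/e^2 := by
      rw [show (4:ℝ) = 2^2 by norm_num, ← pow_mul, mul_comm, pow_mul, h2k]; ring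
    have h16k : (16:ℝ)^k = 1/e^4 := by
      rw [show (16:ℝ) = 2^4 by norm_num, ← pow_mul, mul_comm, pow_mul, h2k]; ring
    have hRk : 1 ≤ R/16*e := by
      have := hKmin k hk
      rw [h2k, mul_one_div, div_le_iff₀ e0] at this
      linarith
    have hst := mv_step Γ c hlazy F a α ha hα hfk z R hR hF S hS T u hsub
      (R/2*(1+e)) (R/16*e) (T/2*(1-e)) (T/8*e) (θ*(1-e)) (θ*(1-e/2))
      (by nlinarith) hRk (mul_nonneg (by positivity) (by linarith)) (by positivity)
      (by nlinarith [mul_pos hθp e0]) (C2 * (1/e^2) * D * J k) (by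
        apply mul_le_mul_of_nonneg_right _ hJk
        have h1 : 1/(T/8*e) + 1/(R/16*e)^2 ≤ 256 * (1/e^2) * D := mv_scale T R e hTp hRp e0 e1
        calc _ ≤ ((1+2*(1/c+c/4))*(4/c)) * (256 * (1/e^2) * D) :=
              mul_le_mul_of_nonneg_left h1 (by positivity)
          _ = _ := by rw [hC2]; ring)
    have e3 : R/2*(1+e) - 2*(R/16*e) - 2*(R/16*e) = R/2*(1+e/2) := by ring
    have e4 : (T:ℝ)/2*(1-e) + T/8*e + T/8*e = T/2*(1-e/2) := by ring
    rw [e3, e4] at hst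
    have hJk1 : J (k+1) = mvJ Γ z S T u (R/2*(1+e/2)) (T/2*(1-e/2)) (θ*(1-e/2)) := by
      simp only [hJ, he2]
    rw [hJk1]
    refine hst.trans_eq ?_
    have e5 : C2 * (1/e^2) * D * J k / ((θ*(1-e/2) - θ*(1-e))^2 * F z R) =
        4*C2*D/(θ^2*F z R) * 16^k * J k := by
      rw [h16k, show θ*(1-e/2) - θ*(1-e) = θ*e/2 by ring]
      field_simp
      norm_num
    rw [e5, h4k]; ring
  have h416 : (16*q)^α * 4 = 1 := by
    rw [hq, show (16:ℝ) * (4^(-(1/α))/16) = 4^(-(1/α)) by ring, ← Real.rpow_mul (by norm_num),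
      show -(1/α)*α = -1 by field_simp, Real.rpow_neg_one]
    norm_num
  have hstart : (R^2/a*C2*D) * ((4*C2*D/(θ^2*F z R)) * J 0)^α ≤ q := by
    rw [hJz, hθsq]
    have e1 : 4*C2*D/(M * P * J0 / F z R*F z R) * J0 = (4*C2/M) * (D / P) := by
      field_simp
    have e2 : 4*C2/M = ((C2/(a*q))⁻¹)^(1/α) := by
      rw [hM, Real.inv_rpow (by positivity)]; field_simp
    have e3 : (D/P)^α = 1/(D*R^2) := by
      rw [hP, Real.div_rpow hDp.le (by positivity), Real.mul_rpow (by positivity) (by positivity),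
        ← Real.rpow_mul hDp.le, ← Real.rpow_mul hRp.le, show (1+1/α)*α = α + 1 by field_simp,
        show 2/α*α = ((2:ℕ):ℝ) by field_simp; norm_num, Real.rpow_natCast, Real.rpow_add hDp,
        Real.rpow_one]
      have : 0 < D^α := by positivity
      field_simp
    rw [e1, Real.mul_rpow (by positivity) (by positivity), e2, ← Real.rpow_mul (by positivity),
      one_div_mul_cancel hα.ne', Real.rpow_one, e3]
    apply le_of_eq
    field_simp
  have hJK := mv_iter K J (R^2/a*C2*D) (4*C2*D/(θ^2*F z R)) q α
    (fun k => mvJ_nonneg _ _ _ _ _ _ _ _) (by positivity) (by positivity) hqp hα h416 hrec hstart K le_rfl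
  obtain ⟨e0, e1⟩ := hhalf K
  have hptK := hpt (R/2*(1+(1/2)^K)) (T/2*(1-(1/2)^K)) (θ*(1-(1/2)^K)) (by positivity) (by nlinarith)
  have h1 := hptK.trans hJK
  rw [hJz] at h1
  set X := max 0 (u T z - θ*(1-(1/2)^K)) with hX
  have hX0 : 0 ≤ X := le_max_left _ _
  -- q^K
  have hqK : q^K ≤ 256^(1+1/α) * D^(1+1/α) := by
    have hp : 0 < 1+1/α := by positivity
    have q1 : q ≤ ((1/2:ℝ)^2)^(1+1/α) := by
      rw [hq, show ((1/2:ℝ)^2) = 4⁻¹ by norm_num, Real.inv_rpow (by norm_num), Real.rpow_add (by norm_num),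
        Real.rpow_one, Real.rpow_neg (by norm_num)]
      have : (0:ℝ) < 4^(1/α) := by positivity
      rw [mul_inv, div_eq_mul_inv, mul_comm]
      apply mul_le_mul_of_nonneg_right (by norm_num) (by positivity)
    calc q^K ≤ (((1/2:ℝ)^2)^(1+1/α))^K := pow_le_pow_left₀ hqp.le q1 K
      _ = (((1/2:ℝ)^K)^2)^(1+1/α) := by
          rw [← Real.rpow_natCast (((1/2:ℝ)^2)^(1+1/α)) K, ← Real.rpow_mul (by positivity), mul_comm (1+1/α),
            Real.rpow_mul (by positivity), Real.rpow_natCast, ← pow_mul, ← pow_mul, mul_comm 2 K]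
      _ ≤ (256*D)^(1+1/α) := by
          apply Real.rpow_le_rpow (by positivity) _ hp.le
          have h2 := hpow2 K
          have h3 : (1/2:ℝ)^K * R ≤ 16 := by nlinarith
          have h4 : (1/2:ℝ)^K ≤ 16/R := by rwa [le_div_iff₀ hRp]
          calc ((1/2:ℝ)^K)^2 ≤ (16/R)^2 := pow_le_pow_left₀ e0.le h4 2
            _ = 256 * (1/R^2) := by rw [div_pow]; ring
            _ ≤ 256 * D := by
              have : 0 < 1/(T:ℝ) := by positivity
              rw [hD]; linarith
      _ = _ := Real.mul_rpow (by norm_num) hDp.le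
  have hpoint := mv_point Γ F a α ha hα hfk z R hR hF S hS
  have hsplit : (R^2/a)^(1/α) = (1/a)^(1/α) * R^(2/α) := by
    rw [show R^2/a = (1/a)*R^2 by ring, Real.mul_rpow (by positivity) (by positivity),
      ← Real.rpow_natCast R 2, ← Real.rpow_mul hRp.le]
    congr 2; push_cast; ring
  rw [hsplit, div_le_iff₀ hwz] at hpoint
  have hXb : X^2 ≤ (256^(1+1/α) * (1/a)^(1/α)) * P * J0 / F z R := by
    rw [le_div_iff₀ hF]
    calc X^2 * F z R ≤ X^2 * ((1/a)^(1/α) * R^(2/α) * Γ.wV z) := by gcongr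
      _ = (X^2 * Γ.wV z) * ((1/a)^(1/α) * R^(2/α)) := by ring
      _ ≤ (q^K * J0) * ((1/a)^(1/α) * R^(2/α)) := by gcongr
      _ ≤ (256^(1+1/α) * D^(1+1/α) * J0) * ((1/a)^(1/α) * R^(2/α)) := by gcongr
      _ = _ := by rw [hP]; ring
  have hub : u T z ≤ θ + X := by
    have h2 : u T z - θ*(1-(1/2)^K) ≤ X := le_max_right _ _
    nlinarith [mul_pos hθp e0]
  calc u T z ^ 2 ≤ (θ+X)^2 := pow_le_pow_left₀ (hu T z) hub 2
    _ ≤ 2*θ^2 + 2*X^2 := by nlinarith [sq_nonneg (θ-X)]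
    _ ≤ 2*(M * P * J0 / F z R) + 2*((256^(1+1/α) * (1/a)^(1/α)) * P * J0 / F z R) := by
        rw [hθsq]; linarith
    _ = _ := by ring

/-- **Lemma (L² mean value inequality).**
Let `(Γ, wV, wE)` be a weighted graph with controlled and uniformly lazy weights
admitting a relative Faber-Krahn function `Λ(B(z,r),ν) = (a/r²)(F(z,r)/ν)^α`.  Then
there is a constant `C` such that for every `z`, every `R ≥ 1`, every integer `T ≥ 1`
and every non-negative subsolution `u` of the discrete heat equation on
`{0, …, 2T} × B(z,R)`:
`u(T,z)² ≤ C (F(z,R) · min{T^{1+1/α} R^{-2/α}, R²})⁻¹ ∑_{k=0}^{2T} ∑_{x ∈ B(z,R)} u(k,x)² π(x)`. -/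
theorem l2_mean_value_inequality {V : Type*} [Countable V]
    (Γ : WeightedGraph V) (Cc Ce : ℝ)
    (hctrl : Γ.Controlled Cc) (hlazy : Γ.UniformlyLazy Ce)
    (F : V → ℝ → ℝ) (hF : ∀ z : V, ∀ r : ℝ, 0 < r → 0 < F z r)
    (a α : ℝ) (ha : 0 < a) (hα : 0 < α)
    (hfk : Γ.IsRelFK (fun z r ν => (a / r ^ 2) * (F z r / ν) ^ α)) :
    ∃ C : ℝ, 0 < C ∧
      ∀ z : V, ∀ R : ℝ, 1 ≤ R → ∀ T : ℕ, 1 ≤ T → ∀ u : ℕ → V → ℝ,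
        (∀ n : ℕ, ∀ x : V, 0 ≤ u n x) →
        (∀ n : ℕ, n ≤ 2 * T → ∀ x ∈ Γ.ball z R,
          u (n + 1) x - u n x ≤ ∑' y, mkernel Γ.wV Γ.wE x y * (u n y - u n x)) →
        u T z ^ 2 ≤
          C / (F z R * min ((T : ℝ) ^ (1 + 1 / α) * R ^ (-(2 / α))) (R ^ 2)) *
            ∑ k ∈ Finset.range (2 * T + 1),
              setSum (Γ.ball z R) (fun x => u k x ^ 2 * Γ.wV x) := by
  have hc0 := hlazy.1.1
  obtain ⟨C2, hC2⟩ : ∃ C2 : ℝ, C2 = 256 * ((1+2*(1/Ce+Ce/4))*(4/Ce)) := ⟨_, rfl⟩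
  obtain ⟨q, hq⟩ : ∃ q : ℝ, q = 4^(-(1/α))/16 := ⟨_, rfl⟩
  obtain ⟨M, hM⟩ : ∃ M : ℝ, M = 4*C2*(C2/(a*q))^(1/α) := ⟨_, rfl⟩
  have hC2p : 0 < C2 := by rw [hC2]; positivity
  have hqp : 0 < q := by rw [hq]; positivity
  have hMp : 0 < M := by rw [hM]; positivity
  obtain ⟨C3, hC3⟩ : ∃ C3 : ℝ, C3 = 2*M + 2*(256^(1+1/α) * (1/a)^(1/α)) := ⟨_, rfl⟩
  have hC3p : 0 < C3 := by rw [hC3]; positivity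
  refine ⟨C3 * 2^(1+1/α), by positivity, ?_⟩
  intro z R hR T hT u hu hsub
  have hRp : 0 < R := by linarith
  have hTp : (0:ℝ) < T := by exact_mod_cast hT
  have hFp := hF z R hRp
  have hfin : (Γ.ball z R).Finite := by
    refine (mv_ball_finite Γ Cc hctrl z ⌊R⌋₊).subset fun y hy => ?_
    exact Nat.le_floor hy
  obtain ⟨S, hSeq⟩ : ∃ S : Finset V, (S : Set V) = Γ.ball z R := ⟨hfin.toFinset, by simp⟩
  have hS : ∀ x, x ∈ S ↔ (Γ.G.dist z x : ℝ) ≤ R := by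
    intro x
    rw [← Finset.mem_coe, hSeq]; rfl
  have hcore := mv_core Γ Ce hlazy F a α ha hα hfk C2 q M hC2 hq hM z R hR hFp S hS T hT u hu
    (fun n hn x hx => hsub n (by omega) x ((hS x).1 hx))
  rw [← hC3] at hcore
  rw [← hSeq]
  have hset : ∀ k, setSum (S : Set V) (fun x => u k x ^ 2 * Γ.wV x) = ∑ x ∈ S, u k x ^ 2 * Γ.wV x := by
    intro k
    unfold setSum
    exact Finset.tsum_subtype' S (fun x => u k x ^ 2 * Γ.wV x)
  simp_rw [hset]
  set Sm := ∑ k ∈ Finset.range (2 * T + 1), ∑ x ∈ S, u k x ^ 2 * Γ.wV x with hSm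
  have hJ : mvJ Γ z S T u R 0 0 ≤ Sm := by
    unfold mvJ
    have : ∀ k, ∑ x ∈ S.filter (fun x => (Γ.G.dist z x : ℝ) ≤ R), (max 0 (u k x - 0))^2 * Γ.wV x
        = ∑ x ∈ S, u k x ^ 2 * Γ.wV x := by
      intro k
      rw [Finset.filter_true_of_mem (fun x hx => (hS x).1 hx)]
      refine Finset.sum_congr rfl fun x _ => ?_
      rw [sub_zero, max_eq_right (hu k x)]
    simp_rw [this]
    apply Finset.sum_le_sum_of_subset_of_nonneg
    · intro k hk
      rw [Finset.mem_filter, Finset.mem_range] at hk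
      rw [Finset.mem_range]; omega
    · intro k _ _
      exact Finset.sum_nonneg fun x _ => mul_nonneg (sq_nonneg _) (Γ.wV_pos x).le
  have hnum := mv_final_num T R α hTp hRp hα
  set P := (1/(T:ℝ) + 1/R^2)^(1+1/α) * R^(2/α) with hP
  have hPp : 0 < P := by positivity
  set m := min ((T : ℝ) ^ (1 + 1 / α) * R ^ (-(2 / α))) (R ^ 2) with hm
  have hmp : 0 < m := lt_min (by positivity) (by positivity)
  have hSm0 : 0 ≤ Sm := (mvJ_nonneg _ _ _ _ _ _ _ _).trans hJ
  calc u T z ^ 2 ≤ C3 * P * mvJ Γ z S T u R 0 0 / F z R := hcore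
    _ ≤ C3 * P * Sm / F z R := by gcongr
    _ = C3 * (P * m) * Sm / (F z R * m) := by field_simp
    _ ≤ C3 * 2^(1+1/α) * Sm / (F z R * m) := by gcongr
    _ = _ := by ring
end
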